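/- arXiv:1208.2294 — 2 statements merged into one kernel-verified Lean document; each statement's English description precedes it below -/
import Mathlib

section
/- Let f ∈ DNF^{k,r} and 0 < ε ≤ 1, and set τ = ⌈28k·log₂(2r/ε)⌉. Then there exists an M-sparse function g: {−1,1}^n → ℝ with M ≤ 32r²(28k)^{2τ}/ε such that g ε-approximates f, i.e., E_{x uniform}[(f(x) − g(x))²] ≤ ε. -/
/-- Fourier coefficient `f̂(S) = E_x[f(x)·χ_S(x)]` of `f : {−1,1}^n → ℝ`,
where `{0,1}` is identified with `{−1,1}` via `b ↦ 2b−1`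
(so `true ↦ 1` and `false ↦ −1`), and `χ_S(x) = ∏_{i∈S} x_i`. -/
noncomputable def pbFourier {n : ℕ} (f : (Fin n → Bool) → ℝ)
    (S : Finset (Fin n)) : ℝ :=
  (∑ x : Fin n → Bool, f x * ∏ i ∈ S, (if x i then (1 : ℝ) else -1)) / 2 ^ n

/-- `f ∈ DNF^{k,r}`: `f = (2/r)·F − 1` for a pseudo-Boolean k-DNF `F` with
constants in `{0,…,r}`. -/
def IsPBDNF {n : ℕ} (k r : ℕ) (f : (Fin n → Bool) → ℝ) : Prop :=
  ∃ (m : ℕ) (a : Fin m → ℕ) (A B : Fin m → Finset (Fin n)),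
    (∀ t, a t ≤ r) ∧ (∀ t, (A t).card + (B t).card ≤ k) ∧
    ∀ x, f x = 2 / r *
      ((Finset.univ.sup fun t =>
        if (∀ i ∈ A t, x i = true) ∧ (∀ j ∈ B t, x j = false) then a t else 0 : ℕ) : ℝ)
      - 1

section Comb

variable {n : ℕ}

def PBClosed (P : (Fin n → Option Bool) → Prop) : Prop :=
  ∀ ρ i b, P ρ → ρ i = none → P (Function.update ρ i (some b))

open Classical in
noncomputable def pbS (P : (Fin n → Option Bool) → Prop) (G : (Fin n → Option Bool) → ℝ) : ℝ :=
  ∑ ρ with P ρ, G ρ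

theorem pbS_congr (P Q : (Fin n → Option Bool) → Prop) (G : (Fin n → Option Bool) → ℝ)
    (h : ∀ ρ, P ρ ↔ Q ρ) : pbS P G = pbS Q G := by
  have : P = Q := funext fun ρ => propext (h ρ)
  rw [this]

theorem pbS_le (P : (Fin n → Option Bool) → Prop) (G H : (Fin n → Option Bool) → ℝ)
    (h : ∀ ρ, P ρ → G ρ ≤ H ρ) : pbS P G ≤ pbS P H := by
  unfold pbS
  apply Finset.sum_le_sum
  intro ρ hρ
  exact h ρ (by simpa using hρ)

theorem pbS_congr' (P : (Fin n → Option Bool) → Prop) (G H : (Fin n → Option Bool) → ℝ)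
    (h : ∀ ρ, P ρ → G ρ = H ρ) : pbS P G = pbS P H :=
  le_antisymm (pbS_le _ _ _ fun ρ hρ => (h ρ hρ).le) (pbS_le _ _ _ fun ρ hρ => (h ρ hρ).ge)

theorem pbS_nonneg (P : (Fin n → Option Bool) → Prop) (G : (Fin n → Option Bool) → ℝ)
    (h : ∀ ρ, 0 ≤ G ρ) : 0 ≤ pbS P G := by
  unfold pbS
  exact Finset.sum_nonneg fun ρ _ => h ρ

theorem pbS_split (P R : (Fin n → Option Bool) → Prop) (G : (Fin n → Option Bool) → ℝ) :
    pbS P G = pbS (fun ρ => P ρ ∧ R ρ) G + pbS (fun ρ => P ρ ∧ ¬ R ρ) G := by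
  classical
  simp only [pbS, Finset.sum_filter]
  rw [← Finset.sum_add_distrib]
  apply Finset.sum_congr rfl
  intro ρ _
  by_cases h1 : P ρ <;> by_cases h2 : R ρ <;> simp [h1, h2]

theorem pbS_add (P : (Fin n → Option Bool) → Prop) (G H : (Fin n → Option Bool) → ℝ) :
    pbS P (fun ρ => G ρ + H ρ) = pbS P G + pbS P H := by
  unfold pbS
  exact Finset.sum_add_distrib

def PBNF (s : Fin n → Bool) (V : Finset (Fin n)) (ρ : Fin n → Option Bool) : Prop :=
  ∀ i ∈ V, ρ i ≠ some (!s i)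

def PBSat (s : Fin n → Bool) (V : Finset (Fin n)) (ρ : Fin n → Option Bool) : Prop :=
  ∀ i ∈ V, ρ i = some (s i)

theorem pb_reindex (W G : (Fin n → Option Bool) → ℝ) (q : ℝ) (i : Fin n) (b : Bool)
    (hW : ∀ ρ i b, ρ i = none → W ρ = q * W (Function.update ρ i (some b)))
    (Q : (Fin n → Option Bool) → Prop) :
    pbS (fun ρ => (ρ i = none ∧ Q ρ)) (fun ρ => W ρ * G (Function.update ρ i (some b))) =
      q * pbS (fun σ => (σ i = some b ∧ Q (Function.update σ i none))) (fun σ => W σ * G σ) := by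
  classical
  unfold pbS
  rw [Finset.mul_sum]
  refine Finset.sum_nbij' (fun ρ => Function.update ρ i (some b))
    (fun σ => Function.update σ i none) ?_ ?_ ?_ ?_ ?_
  · intro ρ h
    simp only [Finset.mem_filter, Finset.mem_univ, true_and] at h ⊢
    refine ⟨by simp, ?_⟩
    have : Function.update (Function.update ρ i (some b)) i none = ρ := by
      rw [Function.update_idem, ← h.1, Function.update_eq_self]
    rw [this]; exact h.2
  · intro σ h
    simp only [Finset.mem_filter, Finset.mem_univ, true_and] at h ⊢
    exact ⟨by simp, h.2⟩
  · intro ρ h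
    simp only [Finset.mem_filter, Finset.mem_univ, true_and] at h
    simp only [Function.update_idem]
    rw [← h.1, Function.update_eq_self]
  · intro σ h
    simp only [Finset.mem_filter, Finset.mem_univ, true_and] at h
    simp only [Function.update_idem]
    rw [← h.1, Function.update_eq_self]
  · intro ρ h
    simp only [Finset.mem_filter, Finset.mem_univ, true_and] at h
    rw [hW ρ i b h.1]; ring

theorem pb_mono (W : (Fin n → Option Bool) → ℝ) (hW0 : ∀ ρ, 0 ≤ W ρ)
    (P Q : (Fin n → Option Bool) → Prop) (h : ∀ ρ, P ρ → Q ρ) :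
    pbS (fun ρ => P ρ) (fun ρ => W ρ) ≤ pbS (fun ρ => Q ρ) (fun ρ => W ρ) := by
  unfold pbS
  apply Finset.sum_le_sum_of_subset_of_nonneg
  · intro ρ; simp only [Finset.mem_filter, Finset.mem_univ, true_and]; exact h ρ
  · intros; exact hW0 _

theorem pb_closed_star (P : (Fin n → Option Bool) → Prop) (hP : PBClosed P) (i : Fin n) (b : Bool) :
    PBClosed (fun σ => σ i = some b ∧ P (Function.update σ i none)) := by
  intro ρ j c h hj
  have hij : j ≠ i := by rintro rfl; simp [h.1] at hj
  refine ⟨by rw [Function.update_of_ne (Ne.symm hij)]; exact h.1, ?_⟩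
  rw [Function.update_comm hij]
  exact hP _ j c h.2 (by rw [Function.update_of_ne hij]; exact hj)

theorem pb_closed_fix (P : (Fin n → Option Bool) → Prop) (hP : PBClosed P) (i : Fin n) (b : Bool) :
    PBClosed (fun σ => σ i = some b ∧ P σ) := by
  intro ρ j c h hj
  have hij : j ≠ i := by rintro rfl; simp [h.1] at hj
  exact ⟨by rw [Function.update_of_ne (Ne.symm hij)]; exact h.1, hP _ j c h.2 hj⟩

theorem pb_nf_update (s : Fin n → Bool) (V : Finset (Fin n)) (ρ : Fin n → Option Bool)
    (i : Fin n) (hi : i ∉ V) (o : Option Bool) :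
    PBNF s V (Function.update ρ i o) ↔ PBNF s V ρ := by
  unfold PBNF
  refine forall₂_congr fun j hj => ?_
  rw [Function.update_of_ne (by rintro rfl; exact hi hj)]

theorem pb_sat_update (s : Fin n → Bool) (V : Finset (Fin n)) (ρ : Fin n → Option Bool)
    (i : Fin n) (hi : i ∉ V) (o : Option Bool) :
    PBSat s V (Function.update ρ i o) ↔ PBSat s V ρ := by
  unfold PBSat
  refine forall₂_congr fun j hj => ?_
  rw [Function.update_of_ne (by rintro rfl; exact hi hj)]

-- splitting of the non-falsified sum along one coordinate
theorem pb_split (W Ψ : (Fin n → Option Bool) → ℝ) (s : Fin n → Bool)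
    (V : Finset (Fin n)) (i : Fin n)
    (P : (Fin n → Option Bool) → Prop) :
    pbS (fun ρ => (P ρ ∧ PBNF s (insert i V) ρ)) (fun ρ => W ρ * Ψ ρ) =
    (pbS (fun ρ => ((ρ i = some (s i) ∧ P ρ) ∧ PBNF s V ρ)) (fun ρ => W ρ * Ψ ρ)) +
    pbS (fun ρ => (ρ i = none ∧ (P ρ ∧ PBNF s V ρ))) (fun ρ => W ρ * Ψ ρ) := by
  rw [pbS_split (fun ρ => (P ρ ∧ PBNF s (insert i V) ρ)) (fun ρ => ρ i = some (s i))]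
  congr 1
  · apply pbS_congr
    intro ρ
    simp only [PBNF, Finset.forall_mem_insert]
    rcases h : ρ i with _ | b
    · simp
    · cases b <;> cases hs : s i <;> simp
  · apply pbS_congr
    intro ρ
    simp only [PBNF, Finset.forall_mem_insert]
    rcases h : ρ i with _ | b
    · simp
    · cases b <;> cases hs : s i <;> simp

theorem pb_star (W G : (Fin n → Option Bool) → ℝ) (q : ℝ) (s : Fin n → Bool)
    (V : Finset (Fin n)) (i : Fin n) (hi : i ∉ V) (b : Bool)
    (hW : ∀ ρ i b, ρ i = none → W ρ = q * W (Function.update ρ i (some b)))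
    (P : (Fin n → Option Bool) → Prop) :
    pbS (fun ρ => (ρ i = none ∧ (P ρ ∧ PBNF s V ρ))) (fun ρ => W ρ * G (Function.update ρ i (some b))) =
    q * pbS (fun σ => ((σ i = some b ∧ P (Function.update σ i none)) ∧ PBNF s V σ)) (fun σ => W σ * G σ) := by
  rw [pb_reindex W G q i b hW (fun ρ => P ρ ∧ PBNF s V ρ)]
  congr 1
  apply pbS_congr
  intro ρ
  simp only [pb_nf_update s V ρ i hi, and_assoc]

theorem pb_sat_le (W : (Fin n → Option Bool) → ℝ) (hW0 : ∀ ρ, 0 ≤ W ρ) (q : ℝ) (hq : 0 ≤ q)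
    (s : Fin n → Bool)
    (V : Finset (Fin n)) (i : Fin n) (hi : i ∉ V) (b : Bool)
    (hW : ∀ ρ i b, ρ i = none → W ρ = q * W (Function.update ρ i (some b)))
    (P : (Fin n → Option Bool) → Prop) (hP : PBClosed P) :
    q * pbS (fun σ => ((σ i = some b ∧ P (Function.update σ i none)) ∧ PBSat s V σ)) (fun σ => W σ) ≤
    q * pbS (fun σ => (P σ ∧ PBSat s (insert i V) σ)) (fun σ => W σ) := by
  have key : ∀ c, q * pbS (fun σ => ((σ i = some c ∧ P (Function.update σ i none)) ∧ PBSat s V σ)) (fun σ => W σ)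
      = pbS (fun ρ => (ρ i = none ∧ (P ρ ∧ PBSat s V ρ))) (fun ρ => W ρ) := by
    intro c
    have := pb_reindex W (fun _ => 1) q i c hW (fun ρ => P ρ ∧ PBSat s V ρ)
    simp only [mul_one] at this
    rw [this]
    congr 1
    apply pbS_congr
    intro ρ
    simp only [pb_sat_update s V ρ i hi, and_assoc]
  rw [key b, ← key (s i)]
  apply mul_le_mul_of_nonneg_left _ hq
  apply pb_mono W hW0
  rintro σ ⟨⟨h1, h2⟩, h3⟩
  refine ⟨?_, ?_⟩
  · have := hP _ i (s i) h2 (by simp)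
    rwa [Function.update_idem, ← h1, Function.update_eq_self] at this
  · intro j hj
    rcases Finset.mem_insert.1 hj with rfl | hj
    · exact h1
    · exact h3 j hj

theorem pb_lemB (W Ψ : (Fin n → Option Bool) → ℝ) (hW0 : ∀ ρ, 0 ≤ W ρ) (q C : ℝ) (hq : 0 ≤ q)
    (hC : 0 ≤ C)
    (hW : ∀ ρ i b, ρ i = none → W ρ = q * W (Function.update ρ i (some b)))
    (hΨ : ∀ ρ i, ρ i = none → Ψ ρ ≤ Ψ (Function.update ρ i (some true)) +
      Ψ (Function.update ρ i (some false)))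
    (hE : ∀ P : (Fin n → Option Bool) → Prop, PBClosed P →
      pbS (fun ρ => P ρ) (fun ρ => W ρ * Ψ ρ) ≤ C * pbS (fun ρ => P ρ) (fun ρ => W ρ))
    (s : Fin n → Bool) (V : Finset (Fin n)) :
    ∀ P : (Fin n → Option Bool) → Prop, PBClosed P →
      pbS (fun ρ => (P ρ ∧ PBNF s V ρ)) (fun ρ => W ρ * Ψ ρ) ≤
        C * (1 + 2 * q) ^ V.card * pbS (fun ρ => (P ρ ∧ PBSat s V ρ)) (fun ρ => W ρ) := by
  induction V using Finset.induction_on with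
  | empty => intro P hP; simpa [PBNF, PBSat] using hE P hP
  | insert i V hi ih =>
    intro P hP
    rw [pb_split]
    set K := C * (1 + 2 * q) ^ V.card with hK
    have hK0 : 0 ≤ K := by positivity
    set Z := pbS (fun ρ => (P ρ ∧ PBSat s (insert i V) ρ)) (fun ρ => W ρ) with hZ
    have h1 : pbS (fun ρ => ((ρ i = some (s i) ∧ P ρ) ∧ PBNF s V ρ)) (fun ρ => W ρ * Ψ ρ) ≤ K * Z := by
      refine (ih _ (pb_closed_fix P hP i (s i))).trans (mul_le_mul_of_nonneg_left ?_ hK0)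
      apply pb_mono W hW0
      rintro σ ⟨⟨h1, h2⟩, h3⟩
      refine ⟨h2, fun j hj => ?_⟩
      rcases Finset.mem_insert.1 hj with rfl | hj
      · exact h1
      · exact h3 j hj
    have h2 : ∀ b, pbS (fun ρ => (ρ i = none ∧ (P ρ ∧ PBNF s V ρ))) (fun ρ => W ρ * Ψ (Function.update ρ i (some b))) ≤ K * (q * Z) := by
      intro b
      rw [pb_star W Ψ q s V i hi b hW P]
      calc _ ≤ q * (K * pbS (fun σ => ((σ i = some b ∧ P (Function.update σ i none)) ∧ PBSat s V σ)) (fun σ => W σ)) :=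
            mul_le_mul_of_nonneg_left (ih _ (pb_closed_star P hP i b)) hq
        _ = K * (q * pbS (fun σ => ((σ i = some b ∧ P (Function.update σ i none)) ∧ PBSat s V σ)) (fun σ => W σ)) := by ring
        _ ≤ _ := mul_le_mul_of_nonneg_left (pb_sat_le W hW0 q hq s V i hi b hW P hP) hK0
    have h3 : pbS (fun ρ => (ρ i = none ∧ (P ρ ∧ PBNF s V ρ))) (fun ρ => W ρ * Ψ ρ) ≤
        K * (q * Z) + K * (q * Z) := by
      refine le_trans ?_ (add_le_add (h2 true) (h2 false))
      rw [← pbS_add]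
      apply pbS_le
      intro ρ hρ
      rw [← mul_add]
      exact mul_le_mul_of_nonneg_left (hΨ ρ i hρ.1) (hW0 ρ)
    rw [Finset.card_insert_of_notMem hi, pow_succ]
    have : C * ((1 + 2 * q) ^ V.card * (1 + 2 * q)) * Z = K * Z + (K * (q * Z) + K * (q * Z)) := by
      rw [hK]; ring
    linarith

theorem pb_lemA (W Ψ Ψ' : (Fin n → Option Bool) → ℝ) (hW0 : ∀ ρ, 0 ≤ W ρ) (q C : ℝ) (hq : 0 ≤ q)
    (hC : 1 ≤ C)
    (hW : ∀ ρ i b, ρ i = none → W ρ = q * W (Function.update ρ i (some b)))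
    (hΨ : ∀ ρ i, ρ i = none → Ψ ρ ≤ Ψ (Function.update ρ i (some true)) +
      Ψ (Function.update ρ i (some false)))
    (hΨ' : ∀ ρ i, ρ i = none → Ψ' ρ ≤ Ψ' (Function.update ρ i (some true)) +
      Ψ' (Function.update ρ i (some false)))
    (hE : ∀ P : (Fin n → Option Bool) → Prop, PBClosed P →
      pbS (fun ρ => P ρ) (fun ρ => W ρ * Ψ' ρ) ≤ C * pbS (fun ρ => P ρ) (fun ρ => W ρ))
    (s : Fin n → Bool) (V₀ : Finset (Fin n))
    (hsat : ∀ ρ, PBSat s V₀ ρ → Ψ ρ ≤ 1)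
    (hfal : ∀ ρ, ¬ PBNF s V₀ ρ → Ψ ρ = Ψ' ρ) (V : Finset (Fin n)) :
    V ⊆ V₀ → ∀ P : (Fin n → Option Bool) → Prop, PBClosed P →
      (∀ ρ, P ρ → PBSat s (V₀ \ V) ρ) →
      pbS (fun ρ => (P ρ ∧ PBNF s V ρ)) (fun ρ => W ρ * Ψ ρ) ≤
        (C * (1 + 2 * q) ^ V.card - (C - 1)) * pbS (fun ρ => (P ρ ∧ PBSat s V ρ)) (fun ρ => W ρ) := by
  induction V using Finset.induction_on with
  | empty =>
    intro _ P hP hPS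
    simp only [PBNF, PBSat, Finset.notMem_empty, false_imp_iff, implies_true, and_true,
      Finset.card_empty, pow_zero, mul_one, sub_sub_cancel, one_mul]
    apply pbS_le
    intro ρ hρ
    have := hsat ρ (by simpa using hPS ρ hρ)
    have := mul_le_mul_of_nonneg_left this (hW0 ρ)
    simpa using this
  | insert i V hi ih =>
    intro hV P hP hPS
    have hiV₀ : i ∈ V₀ := hV (Finset.mem_insert_self _ _)
    have hV' : V ⊆ V₀ := (Finset.subset_insert _ _).trans hV
    rw [pb_split]
    set K := C * (1 + 2 * q) ^ V.card with hK
    have hK0 : 0 ≤ K := by positivity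
    have hKC : C ≤ K := by
      have : 1 ≤ (1 + 2 * q) ^ V.card := one_le_pow₀ (by linarith)
      rw [hK]; nlinarith
    have hA0 : 0 ≤ K - (C - 1) := by linarith
    set Z := pbS (fun ρ => (P ρ ∧ PBSat s (insert i V) ρ)) (fun ρ => W ρ) with hZ
    have hZ0 : 0 ≤ Z := pbS_nonneg _ _ hW0
    have hmem : ∀ j ∈ V₀ \ V, j = i ∨ j ∈ V₀ \ insert i V := by
      intro j hj
      simp only [Finset.mem_sdiff, Finset.mem_insert] at hj ⊢
      tauto
    have h1 : pbS (fun ρ => ((ρ i = some (s i) ∧ P ρ) ∧ PBNF s V ρ)) (fun ρ => W ρ * Ψ ρ) ≤ (K - (C - 1)) * Z := by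
      refine (ih hV' _ (pb_closed_fix P hP i (s i)) ?_).trans (mul_le_mul_of_nonneg_left ?_ hA0)
      · rintro ρ ⟨h1, h2⟩ j hj
        rcases hmem j hj with rfl | hj
        · exact h1
        · exact hPS ρ h2 j hj
      apply pb_mono W hW0
      rintro σ ⟨⟨h1, h2⟩, h3⟩
      refine ⟨h2, fun j hj => ?_⟩
      rcases Finset.mem_insert.1 hj with rfl | hj
      · exact h1
      · exact h3 j hj
    have h2 : pbS (fun ρ => (ρ i = none ∧ (P ρ ∧ PBNF s V ρ))) (fun ρ => W ρ * Ψ (Function.update ρ i (some (s i)))) ≤ (K - (C - 1)) * (q * Z) := by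
      rw [pb_star W Ψ q s V i hi (s i) hW P]
      calc _ ≤ q * ((K - (C - 1)) * pbS (fun σ => ((σ i = some (s i) ∧ P (Function.update σ i none)) ∧ PBSat s V σ)) (fun σ => W σ)) := by
            refine mul_le_mul_of_nonneg_left (ih hV' _ (pb_closed_star P hP i (s i)) ?_) hq
            rintro ρ ⟨h1, h2⟩ j hj
            rcases hmem j hj with rfl | hj
            · exact h1
            · have := hPS _ h2 j hj
              rwa [Function.update_of_ne] at this
              rintro rfl
              simp at hj
        _ = (K - (C - 1)) * (q * pbS (fun σ => ((σ i = some (s i) ∧ P (Function.update σ i none)) ∧ PBSat s V σ)) (fun σ => W σ)) := by ring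
        _ ≤ _ := mul_le_mul_of_nonneg_left (pb_sat_le W hW0 q hq s V i hi (s i) hW P hP) hA0
    have h2' : pbS (fun ρ => (ρ i = none ∧ (P ρ ∧ PBNF s V ρ))) (fun ρ => W ρ * Ψ (Function.update ρ i (some (!s i)))) ≤ K * (q * Z) := by
      have : pbS (fun ρ => (ρ i = none ∧ (P ρ ∧ PBNF s V ρ))) (fun ρ => W ρ * Ψ (Function.update ρ i (some (!s i)))) =
          pbS (fun ρ => (ρ i = none ∧ (P ρ ∧ PBNF s V ρ))) (fun ρ => W ρ * Ψ' (Function.update ρ i (some (!s i)))) := by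
        apply pbS_congr'
        intro ρ _
        rw [hfal]
        intro h
        exact h i hiV₀ (by simp)
      rw [this, pb_star W Ψ' q s V i hi (!s i) hW P]
      calc _ ≤ q * (K * pbS (fun σ => ((σ i = some (!s i) ∧ P (Function.update σ i none)) ∧ PBSat s V σ)) (fun σ => W σ)) :=
            mul_le_mul_of_nonneg_left (pb_lemB W Ψ' hW0 q C hq (by linarith) hW hΨ' hE s V _
              (pb_closed_star P hP i (!s i))) hq
        _ = K * (q * pbS (fun σ => ((σ i = some (!s i) ∧ P (Function.update σ i none)) ∧ PBSat s V σ)) (fun σ => W σ)) := by ring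
        _ ≤ _ := mul_le_mul_of_nonneg_left (pb_sat_le W hW0 q hq s V i hi (!s i) hW P hP) hK0
    have h3 : pbS (fun ρ => (ρ i = none ∧ (P ρ ∧ PBNF s V ρ))) (fun ρ => W ρ * Ψ ρ) ≤
        (K - (C - 1)) * (q * Z) + K * (q * Z) := by
      refine le_trans ?_ (add_le_add h2 h2')
      rw [← pbS_add]
      apply pbS_le
      intro ρ hρ
      rw [← mul_add]
      refine mul_le_mul_of_nonneg_left ?_ (hW0 ρ)
      have := hΨ ρ i hρ.1
      cases s i
      · simp only [Bool.not_false]; linarith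
      · simpa using this
    rw [Finset.card_insert_of_notMem hi, pow_succ]
    have e : (C * ((1 + 2 * q) ^ V.card * (1 + 2 * q)) - (C - 1)) * Z
      = (K - (C - 1)) * Z + ((K - (C - 1)) * (q * Z) + K * (q * Z)) + (C - 1) * (q * Z) := by
      rw [hK]; ring
    have : 0 ≤ (C - 1) * (q * Z) := mul_nonneg (by linarith) (mul_nonneg hq hZ0)
    linarith

theorem pb_step (W Ψ Ψ' : (Fin n → Option Bool) → ℝ) (hW0 : ∀ ρ, 0 ≤ W ρ) (q C : ℝ) (hq : 0 ≤ q)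
    (hC : 1 ≤ C)
    (hW : ∀ ρ i b, ρ i = none → W ρ = q * W (Function.update ρ i (some b)))
    (hΨ : ∀ ρ i, ρ i = none → Ψ ρ ≤ Ψ (Function.update ρ i (some true)) +
      Ψ (Function.update ρ i (some false)))
    (hΨ' : ∀ ρ i, ρ i = none → Ψ' ρ ≤ Ψ' (Function.update ρ i (some true)) +
      Ψ' (Function.update ρ i (some false)))
    (hE : ∀ P : (Fin n → Option Bool) → Prop, PBClosed P →
      pbS (fun ρ => P ρ) (fun ρ => W ρ * Ψ' ρ) ≤ C * pbS (fun ρ => P ρ) (fun ρ => W ρ))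
    (s : Fin n → Bool) (V : Finset (Fin n))
    (hsat : ∀ ρ, PBSat s V ρ → Ψ ρ ≤ 1)
    (hfal : ∀ ρ, ¬ PBNF s V ρ → Ψ ρ = Ψ' ρ)
    (hV : C * (1 + 2 * q) ^ V.card - (C - 1) ≤ C) :
    ∀ P : (Fin n → Option Bool) → Prop, PBClosed P →
      pbS (fun ρ => P ρ) (fun ρ => W ρ * Ψ ρ) ≤ C * pbS (fun ρ => P ρ) (fun ρ => W ρ) := by
  intro P hP
  have hA := pb_lemA W Ψ Ψ' hW0 q C hq hC hW hΨ hΨ' hE s V hsat hfal V (le_refl _) P hP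
    (by intro ρ _ j hj; simp at hj)
  have hle : pbS (fun ρ => (P ρ ∧ PBSat s V ρ)) (fun ρ => W ρ) ≤ pbS (fun ρ => (P ρ ∧ PBNF s V ρ)) (fun ρ => W ρ) := by
    apply pb_mono W hW0
    rintro ρ ⟨h1, h2⟩
    refine ⟨h1, fun j hj => ?_⟩
    rw [h2 j hj]; simp
  have hF := hE (fun ρ => P ρ ∧ ¬ PBNF s V ρ) (by
    rintro ρ i b ⟨h1, h2⟩ hi
    refine ⟨hP ρ i b h1 hi, fun h => h2 fun j hj => ?_⟩
    have := h j hj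
    by_cases hij : j = i
    · subst hij; simp [hi]
    · rwa [Function.update_of_ne hij] at this)
  have hF' : pbS (fun ρ => (P ρ ∧ ¬ PBNF s V ρ)) (fun ρ => W ρ * Ψ ρ) = pbS (fun ρ => (P ρ ∧ ¬ PBNF s V ρ)) (fun ρ => W ρ * Ψ' ρ) := by
    apply pbS_congr'
    intro ρ hρ
    rw [hfal ρ hρ.2]
  have hsp : ∀ G : (Fin n → Option Bool) → ℝ, pbS (fun ρ => P ρ) (fun ρ => G ρ) =
      pbS (fun ρ => (P ρ ∧ PBNF s V ρ)) (fun ρ => G ρ) + pbS (fun ρ => (P ρ ∧ ¬ PBNF s V ρ)) (fun ρ => G ρ) := by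
    intro G
    exact pbS_split _ _ _
  rw [hsp, hsp W, hF']
  have hS0 : 0 ≤ pbS (fun ρ => (P ρ ∧ PBSat s V ρ)) (fun ρ => W ρ) := pbS_nonneg _ _ hW0
  have h5 := mul_le_mul_of_nonneg_right hV hS0
  have h6 := mul_le_mul_of_nonneg_left hle (by linarith : 0 ≤ C)
  rw [mul_add]
  linarith

end Comb

/-- decision lists of `k`-terms with values in `[-1,1]` -/
inductive PBDL (n k : ℕ) : ((Fin n → Bool) → ℝ) → Prop
  | const (c : ℝ) (hc : |c| ≤ 1) : PBDL n k (fun _ => c)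
  | cons (V : Finset (Fin n)) (s : Fin n → Bool) (c : ℝ) (f : (Fin n → Bool) → ℝ)
      (hV : V.card ≤ k) (hc : |c| ≤ 1) (hf : PBDL n k f) :
      PBDL n k (fun x => if ∀ i ∈ V, x i = s i then c else f x)

def pbRestr {n : ℕ} (ρ : Fin n → Option Bool) (f : (Fin n → Bool) → ℝ) : (Fin n → Bool) → ℝ :=
  fun x => f (fun i => (ρ i).getD (x i))

theorem pbRestr_update {n : ℕ} (ρ : Fin n → Option Bool) (f : (Fin n → Bool) → ℝ) (i : Fin n)
    (hi : ρ i = none) (b : Bool) :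
    pbRestr (Function.update ρ i (some b)) f = fun x => pbRestr ρ f (Function.update x i b) := by
  funext x
  unfold pbRestr
  congr 1
  funext j
  by_cases h : j = i
  · subst h; simp [hi]
  · simp [Function.update_of_ne h]

theorem pb_dl_bound {n k : ℕ} (W : (Fin n → Option Bool) → ℝ) (hW0 : ∀ ρ, 0 ≤ W ρ) (q C : ℝ)
    (hq : 0 ≤ q) (hC : 1 ≤ C)
    (hW : ∀ ρ i b, ρ i = none → W ρ = q * W (Function.update ρ i (some b)))
    (hk : C * (1 + 2 * q) ^ k - (C - 1) ≤ C)
    (Φ : ((Fin n → Bool) → ℝ) → ℝ)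
    (hΦ : ∀ f i, Φ f ≤ Φ (fun x => f (Function.update x i true)) +
      Φ (fun x => f (Function.update x i false)))
    (hc : ∀ c : ℝ, |c| ≤ 1 → Φ (fun _ => c) ≤ 1)
    (f : (Fin n → Bool) → ℝ) (hf : PBDL n k f) :
    ∑ ρ, W ρ * Φ (pbRestr ρ f) ≤ C * ∑ ρ, W ρ := by
  have hsub : ∀ f : (Fin n → Bool) → ℝ, ∀ ρ i, ρ i = none →
      Φ (pbRestr ρ f) ≤ Φ (pbRestr (Function.update ρ i (some true)) f) +
      Φ (pbRestr (Function.update ρ i (some false)) f) := by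
    intro f ρ i hi
    rw [pbRestr_update ρ f i hi, pbRestr_update ρ f i hi]
    exact hΦ _ _
  have main : ∀ P : (Fin n → Option Bool) → Prop, PBClosed P →
      pbS (fun ρ => P ρ) (fun ρ => W ρ * Φ (pbRestr ρ f)) ≤ C * pbS (fun ρ => P ρ) (fun ρ => W ρ) := by
    induction hf with
    | const c hc1 =>
      intro P _
      unfold pbS
      rw [Finset.mul_sum]
      apply Finset.sum_le_sum
      intro ρ _
      have : Φ (pbRestr ρ (fun _ => c)) ≤ C := (hc c hc1).trans hC
      rw [mul_comm C]
      exact mul_le_mul_of_nonneg_left this (hW0 ρ)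
    | cons V s c f hV hc1 hf ih =>
      refine pb_step W _ (fun ρ => Φ (pbRestr ρ f)) hW0 q C hq hC hW (hsub _) (hsub _) ih s V ?_ ?_ ?_
      · intro ρ hρ
        have : pbRestr ρ (fun x => if ∀ i ∈ V, x i = s i then c else f x) = fun _ => c := by
          funext x
          simp only [pbRestr]
          rw [if_pos]
          intro i hi
          rw [hρ i hi]; rfl
        rw [this]; exact hc c hc1
      · intro ρ hρ
        have : pbRestr ρ (fun x => if ∀ i ∈ V, x i = s i then c else f x) = pbRestr ρ f := by
          funext x
          simp only [pbRestr]
          rw [if_neg]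
          intro h
          apply hρ
          intro i hi h'
          have := h i hi
          rw [h'] at this
          simp at this
        rw [this]
      · have : (1 + 2 * q) ^ V.card ≤ (1 + 2 * q) ^ k := pow_le_pow_right₀ (by linarith) hV
        have := mul_le_mul_of_nonneg_left this (by linarith : 0 ≤ C)
        linarith
  simpa [pbS] using main (fun _ => True) (fun _ _ _ _ _ => trivial)

noncomputable def pbSg (b : Bool) : ℝ := if b then 1 else -1

noncomputable def pbChi {n : ℕ} (S : Finset (Fin n)) (x : Fin n → Bool) : ℝ :=
  ∏ i, if i ∈ S then pbSg (x i) else 1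

theorem pbFourier_eq {n : ℕ} (f : (Fin n → Bool) → ℝ) (S : Finset (Fin n)) :
    pbFourier f S = (∑ x, f x * pbChi S x) / 2 ^ n := by
  unfold pbFourier pbChi pbSg
  simp only [Finset.prod_ite_mem, Finset.univ_inter]

theorem pb_sum_prod {n : ℕ} {α : Type} [Fintype α] (F : Fin n → α → ℝ) :
    ∑ x : Fin n → α, ∏ i, F i (x i) = ∏ i, ∑ a, F i a := by
  classical
  rw [Finset.prod_univ_sum, Fintype.piFinset_univ]

theorem pb_sum_set {n : ℕ} (a b : Fin n → ℝ) :
    ∑ S : Finset (Fin n), ∏ i, (if i ∈ S then a i else b i) = ∏ i, (a i + b i) := by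
  rw [Finset.prod_add, Finset.powerset_univ]
  apply Finset.sum_congr rfl
  intro S _
  rw [Finset.prod_ite]
  congr 1
  · apply Finset.prod_congr _ (fun _ _ => rfl); ext; simp
  · apply Finset.prod_congr _ (fun _ _ => rfl); ext; simp

theorem pb_prod_delta {n : ℕ} (S T : Finset (Fin n)) (c : Fin n → ℝ) :
    (∏ i, if (i ∈ S ↔ i ∈ T) then c i else 0) = if S = T then ∏ i, c i else 0 := by
  split_ifs with h
  · subst h; simp
  · have : ∃ i, ¬ (i ∈ S ↔ i ∈ T) := by
      by_contra! h'
      exact h (Finset.ext h')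
    obtain ⟨i, hi⟩ := this
    exact Finset.prod_eq_zero (Finset.mem_univ i) (if_neg hi)

theorem pb_orth {n : ℕ} (S T : Finset (Fin n)) :
    ∑ x, pbChi S x * pbChi T x = if S = T then 2 ^ n else 0 := by
  have h1 : ∀ x, pbChi S x * pbChi T x =
      ∏ i, (if i ∈ S then pbSg (x i) else 1) * (if i ∈ T then pbSg (x i) else 1) := by
    intro x; rw [Finset.prod_mul_distrib]; rfl
  simp only [h1]
  rw [pb_sum_prod (fun i b => (if i ∈ S then pbSg b else 1) * (if i ∈ T then pbSg b else 1))]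
  have h2 : ∀ i, ∑ b, (if i ∈ S then pbSg b else 1) * (if i ∈ T then pbSg b else 1) =
      if (i ∈ S ↔ i ∈ T) then 2 else 0 := by
    intro i
    by_cases hS : i ∈ S <;> by_cases hT : i ∈ T <;> simp [hS, hT, pbSg] <;> norm_num
  simp only [h2]
  rw [pb_prod_delta]
  simp

theorem pb_orth' {n : ℕ} (x y : Fin n → Bool) :
    ∑ S : Finset (Fin n), pbChi S x * pbChi S y = if x = y then 2 ^ n else 0 := by
  have h1 : ∀ S : Finset (Fin n), pbChi S x * pbChi S y =
      ∏ i, if i ∈ S then pbSg (x i) * pbSg (y i) else 1 := by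
    intro S
    unfold pbChi
    rw [← Finset.prod_mul_distrib]
    apply Finset.prod_congr rfl
    intro i _
    split_ifs <;> simp
  simp only [h1]
  rw [pb_sum_set]
  split_ifs with h
  · subst h
    have : ∀ i, pbSg (x i) * pbSg (x i) + 1 = 2 := by
      intro i; cases x i <;> simp [pbSg] <;> norm_num
    simp [this]
  · obtain ⟨i, hi⟩ := Function.ne_iff.1 h
    apply Finset.prod_eq_zero (Finset.mem_univ i)
    revert hi
    cases x i <;> cases y i <;> simp [pbSg]

theorem pb_inv {n : ℕ} (f : (Fin n → Bool) → ℝ) (x : Fin n → Bool) :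
    f x = ∑ S, pbFourier f S * pbChi S x := by
  have h : ∀ S, pbFourier f S * pbChi S x = (∑ y, f y * (pbChi S y * pbChi S x)) / 2 ^ n := by
    intro S
    rw [pbFourier_eq, div_mul_eq_mul_div, Finset.sum_mul]
    simp only [mul_assoc]
  simp only [h]
  rw [← Finset.sum_div, Finset.sum_comm]
  simp only [← Finset.mul_sum, pb_orth']
  simp

theorem pb_parseval {n : ℕ} (f : (Fin n → Bool) → ℝ) :
    (∑ x, f x ^ 2) / 2 ^ n = ∑ S, pbFourier f S ^ 2 := by
  have h : ∀ x, f x ^ 2 = ∑ S, pbFourier f S * (f x * pbChi S x) := by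
    intro x
    rw [sq]
    nth_rewrite 2 [pb_inv f x]
    rw [Finset.mul_sum]
    apply Finset.sum_congr rfl
    intro S _; ring
  simp only [h]
  rw [Finset.sum_comm, Finset.sum_div]
  apply Finset.sum_congr rfl
  intro S _
  rw [← Finset.mul_sum, mul_div_assoc, ← pbFourier_eq, sq]

theorem pb_fourier_sum {n : ℕ} {ι : Type} (s : Finset ι) (c : ι → ℝ)
    (F : ι → (Fin n → Bool) → ℝ) (S : Finset (Fin n)) :
    pbFourier (fun x => ∑ j ∈ s, c j * F j x) S = ∑ j ∈ s, c j * pbFourier (F j) S := by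
  simp only [pbFourier_eq, Finset.sum_mul]
  rw [Finset.sum_comm, Finset.sum_div]
  apply Finset.sum_congr rfl
  intro j _
  rw [← mul_div_assoc, Finset.mul_sum]
  simp only [mul_assoc]

theorem pb_fourier_chi {n : ℕ} (S T : Finset (Fin n)) :
    pbFourier (pbChi T) S = if T = S then 1 else 0 := by
  rw [pbFourier_eq, pb_orth]
  split_ifs <;> simp

noncomputable def pbE (o : Option Bool) (u s : Bool) : ℝ :=
  ((if u then pbSg (o.getD true) else 1) * (if s then pbSg true else 1) +
   (if u then pbSg (o.getD false) else 1) * (if s then pbSg false else 1)) / 2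

theorem pb_fourier_restr_chi {n : ℕ} (ρ : Fin n → Option Bool) (U S : Finset (Fin n)) :
    pbFourier (pbRestr ρ (pbChi U)) S = ∏ i, pbE (ρ i) (decide (i ∈ U)) (decide (i ∈ S)) := by
  rw [pbFourier_eq]
  have h1 : ∀ x, pbRestr ρ (pbChi U) x * pbChi S x =
      ∏ i, (if i ∈ U then pbSg ((ρ i).getD (x i)) else 1) * (if i ∈ S then pbSg (x i) else 1) := by
    intro x; rw [Finset.prod_mul_distrib]; rfl
  simp only [h1]
  rw [pb_sum_prod (fun i b => (if i ∈ U then pbSg ((ρ i).getD b) else 1) *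
    (if i ∈ S then pbSg b else 1))]
  have h2 : (2 : ℝ) ^ n = ∏ _i : Fin n, (2 : ℝ) := by simp
  rw [h2, ← Finset.prod_div_distrib]
  apply Finset.prod_congr rfl
  intro i _
  by_cases hU : i ∈ U <;> by_cases hS : i ∈ S <;> simp [pbE, hU, hS] <;> norm_num

theorem pb_fourier_restr {n : ℕ} (ρ : Fin n → Option Bool) (f : (Fin n → Bool) → ℝ)
    (S : Finset (Fin n)) :
    pbFourier (pbRestr ρ f) S =
      ∑ U, pbFourier f U * ∏ i, pbE (ρ i) (decide (i ∈ U)) (decide (i ∈ S)) := by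
  have : pbRestr ρ f = fun x => ∑ U, pbFourier f U * pbRestr ρ (pbChi U) x := by
    funext x
    unfold pbRestr
    exact pb_inv f _
  rw [this, pb_fourier_sum]
  simp only [pb_fourier_restr_chi]

noncomputable def pbU (p : ℝ) : Option Bool → ℝ
  | none => p
  | some _ => (1 - p) / 2

noncomputable def pbW {n : ℕ} (p : ℝ) (ρ : Fin n → Option Bool) : ℝ := ∏ i, pbU p (ρ i)

theorem pbW_total {n : ℕ} (p : ℝ) : ∑ ρ : Fin n → Option Bool, pbW p ρ = 1 := by
  unfold pbW
  rw [pb_sum_prod (fun _ o => pbU p o)]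
  apply Finset.prod_eq_one
  intro i _
  rw [Fintype.sum_option]
  simp [pbU]
  ring

theorem pbW_nonneg {n : ℕ} (p : ℝ) (h0 : 0 ≤ p) (h1 : p ≤ 1) (ρ : Fin n → Option Bool) :
    0 ≤ pbW p ρ := by
  apply Finset.prod_nonneg
  intro i _
  cases ρ i <;> simp [pbU] <;> linarith

theorem pbW_update {n : ℕ} (p : ℝ) (h1 : p < 1) (ρ : Fin n → Option Bool) (i : Fin n) (b : Bool)
    (hi : ρ i = none) :
    pbW p ρ = (2 * p / (1 - p)) * pbW p (Function.update ρ i (some b)) := by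
  unfold pbW
  rw [← Finset.mul_prod_erase _ _ (Finset.mem_univ i),
    ← Finset.mul_prod_erase Finset.univ (fun j => pbU p (Function.update ρ i (some b) j)) (Finset.mem_univ i)]
  have : ∏ j ∈ Finset.univ.erase i, pbU p (Function.update ρ i (some b) j) =
      ∏ j ∈ Finset.univ.erase i, pbU p (ρ j) := by
    apply Finset.prod_congr rfl
    intro j hj
    rw [Function.update_of_ne (Finset.ne_of_mem_erase hj)]
  rw [this, hi]
  simp only [Function.update_self, pbU]
  have : 1 - p ≠ 0 := by linarith
  field_simp

theorem pb_E1 {n : ℕ} (p : ℝ) (f : (Fin n → Bool) → ℝ) (S : Finset (Fin n)) :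
    ∑ ρ, pbW p ρ * pbFourier (pbRestr ρ f) S = p ^ S.card * pbFourier f S := by
  simp only [pb_fourier_restr, Finset.mul_sum]
  rw [Finset.sum_comm]
  have h : ∀ U, ∑ ρ : Fin n → Option Bool, pbW p ρ * (pbFourier f U *
      ∏ i, pbE (ρ i) (decide (i ∈ U)) (decide (i ∈ S))) =
      pbFourier f U * if U = S then p ^ S.card else 0 := by
    intro U
    have h1 : ∀ ρ : Fin n → Option Bool, pbW p ρ * (pbFourier f U *
      ∏ i, pbE (ρ i) (decide (i ∈ U)) (decide (i ∈ S))) = pbFourier f U *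
        ∏ i, pbU p (ρ i) * pbE (ρ i) (decide (i ∈ U)) (decide (i ∈ S)) := by
      intro ρ
      rw [Finset.prod_mul_distrib]; unfold pbW; ring
    simp only [h1]
    rw [← Finset.mul_sum,
      pb_sum_prod (fun i o => pbU p o * pbE o (decide (i ∈ U)) (decide (i ∈ S)))]
    congr 1
    have h2 : ∀ i, ∑ o, pbU p o * pbE o (decide (i ∈ U)) (decide (i ∈ S)) =
        if (i ∈ U ↔ i ∈ S) then (if i ∈ S then p else 1) else 0 := by
      intro i
      by_cases hU : i ∈ U <;> by_cases hS : i ∈ S <;>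
        simp [hU, hS, pbU, pbE, pbSg, Fintype.sum_option] <;> ring
    simp only [h2]
    rw [pb_prod_delta]
    simp [Finset.prod_ite_mem]
  simp only [h]
  simp [mul_comm]

theorem pb_E2 {n : ℕ} (p : ℝ) (f : (Fin n → Bool) → ℝ) :
    ∑ ρ, pbW p ρ * ∑ S : Finset (Fin n), 2 ^ S.card * pbFourier (pbRestr ρ f) S ^ 2 =
      ∑ U : Finset (Fin n), pbFourier f U ^ 2 * (1 + p) ^ U.card := by
  have key : ∀ S : Finset (Fin n), ∑ ρ, pbW p ρ * pbFourier (pbRestr ρ f) S ^ 2 =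
      ∑ U : Finset (Fin n), pbFourier f U ^ 2 *
        ∏ i, (if i ∈ S then (if i ∈ U then p else 0) else (if i ∈ U then 1 - p else 1)) := by
    intro S
    have h1 : ∀ ρ : Fin n → Option Bool, pbW p ρ * pbFourier (pbRestr ρ f) S ^ 2 =
        ∑ U : Finset (Fin n), ∑ V : Finset (Fin n), pbFourier f U * pbFourier f V *
          ∏ i, pbU p (ρ i) * (pbE (ρ i) (decide (i ∈ U)) (decide (i ∈ S)) *
            pbE (ρ i) (decide (i ∈ V)) (decide (i ∈ S))) := by
      intro ρ
      rw [sq, pb_fourier_restr, Finset.sum_mul_sum, Finset.mul_sum]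
      apply Finset.sum_congr rfl
      intro U _
      rw [Finset.mul_sum]
      apply Finset.sum_congr rfl
      intro V _
      rw [Finset.prod_mul_distrib, Finset.prod_mul_distrib]
      unfold pbW; ring
    simp only [h1]
    rw [Finset.sum_comm]
    apply Finset.sum_congr rfl
    intro U _
    rw [Finset.sum_comm]
    have h3 : ∀ V : Finset (Fin n), ∑ ρ : Fin n → Option Bool, pbFourier f U * pbFourier f V *
          ∏ i, pbU p (ρ i) * (pbE (ρ i) (decide (i ∈ U)) (decide (i ∈ S)) *
            pbE (ρ i) (decide (i ∈ V)) (decide (i ∈ S))) =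
        if U = V then pbFourier f U * pbFourier f V * ∏ i, (if i ∈ S then (if i ∈ U then p else 0) else (if i ∈ U then 1 - p else 1)) else 0 := by
      intro V
      rw [← Finset.mul_sum, pb_sum_prod (fun i o => pbU p o * (pbE o (decide (i ∈ U)) (decide (i ∈ S)) *
            pbE o (decide (i ∈ V)) (decide (i ∈ S))))]
      have h2 : ∀ i, ∑ o, pbU p o * (pbE o (decide (i ∈ U)) (decide (i ∈ S)) *
            pbE o (decide (i ∈ V)) (decide (i ∈ S))) =
          if (i ∈ U ↔ i ∈ V) then (if i ∈ S then (if i ∈ U then p else 0) else (if i ∈ U then 1 - p else 1)) else 0 := by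
        intro i
        by_cases hU : i ∈ U <;> by_cases hS : i ∈ S <;> by_cases hV : i ∈ V <;>
          simp [hU, hS, hV, pbU, pbE, pbSg, Fintype.sum_option] <;> ring
      simp only [h2]
      rw [pb_prod_delta]
      split_ifs <;> simp
    simp only [h3]
    rw [Finset.sum_ite_eq]
    simp [sq]
  simp only [Finset.mul_sum]
  rw [Finset.sum_comm]
  have h4 : ∀ S : Finset (Fin n), ∑ ρ, pbW p ρ * (2 ^ S.card * pbFourier (pbRestr ρ f) S ^ 2) =
      ∑ U : Finset (Fin n), pbFourier f U ^ 2 *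
        ∏ i, (if i ∈ S then 2 * (if i ∈ U then p else 0) else (if i ∈ U then 1 - p else 1)) := by
    intro S
    have : ∀ ρ, pbW p ρ * (2 ^ S.card * pbFourier (pbRestr ρ f) S ^ 2) =
      2 ^ S.card * (pbW p ρ * pbFourier (pbRestr ρ f) S ^ 2) := by intro ρ; ring
    simp only [this]
    rw [← Finset.mul_sum, key, Finset.mul_sum]
    apply Finset.sum_congr rfl
    intro U _
    rw [mul_left_comm]
    congr 1
    have : (2 : ℝ) ^ S.card = ∏ i, if i ∈ S then 2 else 1 := by simp [Finset.prod_ite_mem]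
    rw [this, ← Finset.prod_mul_distrib]
    apply Finset.prod_congr rfl
    intro i _
    split_ifs <;> simp
  simp only [h4]
  rw [Finset.sum_comm]
  apply Finset.sum_congr rfl
  intro U _
  rw [← Finset.mul_sum, pb_sum_set]
  congr 1
  have : ∀ i, (2 * (if i ∈ U then p else 0) + (if i ∈ U then 1 - p else 1)) = if i ∈ U then 1 + p else 1 := by
    intro i; split_ifs <;> ring
  simp only [this]
  simp [Finset.prod_ite_mem]

theorem pbSg_not (b : Bool) : pbSg (!b) = - pbSg b := by cases b <;> simp [pbSg]

theorem pbChi_insert {n : ℕ} (S : Finset (Fin n)) (i : Fin n) (hi : i ∉ S) (x : Fin n → Bool) :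
    pbChi (insert i S) x = pbSg (x i) * pbChi S x := by
  unfold pbChi
  simp only [Finset.prod_ite_mem, Finset.univ_inter]
  rw [Finset.prod_insert hi]

theorem pbChi_update {n : ℕ} (S : Finset (Fin n)) (i : Fin n) (hi : i ∉ S) (x : Fin n → Bool)
    (b : Bool) : pbChi S (Function.update x i b) = pbChi S x := by
  unfold pbChi
  apply Finset.prod_congr rfl
  intro j _
  by_cases h : j = i
  · subst h; simp [hi]
  · rw [Function.update_of_ne h]

theorem pb_vanish {n : ℕ} (f : (Fin n → Bool) → ℝ) (S : Finset (Fin n)) (i : Fin n) (hi : i ∉ S)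
    (c : Bool) : pbFourier (fun x => f (Function.update x i c)) (insert i S) = 0 := by
  rw [pbFourier_eq]
  have hinv : Function.Involutive (fun x : Fin n → Bool => Function.update x i (!x i)) := by
    intro x
    simp
  set e : Equiv.Perm (Fin n → Bool) := Function.Involutive.toPerm _ hinv with he
  have h := Equiv.sum_comp e
    (fun x => f (Function.update x i c) * pbChi (insert i S) x)
  have h2 : ∀ x : Fin n → Bool, f (Function.update (e x) i c) *
      pbChi (insert i S) (e x) =
      - (f (Function.update x i c) * pbChi (insert i S) x) := by
    intro x
    have ex : e x = Function.update x i (!x i) := rfl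
    rw [ex, pbChi_insert S i hi, pbChi_insert S i hi, pbChi_update S i hi]
    simp only [Function.update_idem, Function.update_self, pbSg_not]
    ring
  simp only [h2, Finset.sum_neg_distrib] at h
  have : ∑ x, f (Function.update x i c) * pbChi (insert i S) x = 0 := by linarith
  rw [this]; simp

theorem pb_point {n : ℕ} (f : (Fin n → Bool) → ℝ) (i : Fin n) (x : Fin n → Bool) :
    f x = (f (Function.update x i true) + f (Function.update x i false)) / 2 +
      pbSg (x i) * (f (Function.update x i true) - f (Function.update x i false)) / 2 := by
  have h : f x = f (Function.update x i (x i)) := by rw [Function.update_eq_self]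
  rw [h]
  cases x i <;> simp [pbSg] <;> ring

theorem pbSg_sq (b : Bool) : pbSg b * pbSg b = 1 := by cases b <;> simp [pbSg]

theorem pb_f1 {n : ℕ} (f : (Fin n → Bool) → ℝ) (S : Finset (Fin n)) (i : Fin n) (hi : i ∉ S) :
    pbFourier f S = (pbFourier (fun x => f (Function.update x i true)) S +
      pbFourier (fun x => f (Function.update x i false)) S) / 2 := by
  have h1 := pb_vanish f S i hi true
  have h2 := pb_vanish f S i hi false
  have h : pbFourier f S = (pbFourier (fun x => f (Function.update x i true)) S +
      pbFourier (fun x => f (Function.update x i false)) S) / 2 +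
      (pbFourier (fun x => f (Function.update x i true)) (insert i S) -
      pbFourier (fun x => f (Function.update x i false)) (insert i S)) / 2 := by
    have hs : ∑ x, f x * pbChi S x =
        (((∑ x, f (Function.update x i true) * pbChi S x) + (∑ x, f (Function.update x i false) * pbChi S x)) +
        ((∑ x, f (Function.update x i true) * pbChi (insert i S) x) - (∑ x, f (Function.update x i false) * pbChi (insert i S) x))) / 2 := by
      simp only [← Finset.sum_add_distrib, ← Finset.sum_sub_distrib, Finset.sum_div]
      apply Finset.sum_congr rfl
      intro x _
      simp only [pbChi_insert S i hi]
      linear_combination (pbChi S x) * pb_point f i x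
    simp only [pbFourier_eq]
    rw [hs]; ring
  rw [h, h1, h2]; ring

theorem pb_f2 {n : ℕ} (f : (Fin n → Bool) → ℝ) (S : Finset (Fin n)) (i : Fin n) (hi : i ∉ S) :
    pbFourier f (insert i S) = (pbFourier (fun x => f (Function.update x i true)) S -
      pbFourier (fun x => f (Function.update x i false)) S) / 2 := by
  have h1 := pb_vanish f S i hi true
  have h2 := pb_vanish f S i hi false
  have h : pbFourier f (insert i S) = (pbFourier (fun x => f (Function.update x i true)) S -
      pbFourier (fun x => f (Function.update x i false)) S) / 2 +
      (pbFourier (fun x => f (Function.update x i true)) (insert i S) +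
      pbFourier (fun x => f (Function.update x i false)) (insert i S)) / 2 := by
    have hs : ∑ x, f x * pbChi (insert i S) x =
        (((∑ x, f (Function.update x i true) * pbChi S x) - (∑ x, f (Function.update x i false) * pbChi S x)) +
        ((∑ x, f (Function.update x i true) * pbChi (insert i S) x) + (∑ x, f (Function.update x i false) * pbChi (insert i S) x))) / 2 := by
      simp only [← Finset.sum_add_distrib, ← Finset.sum_sub_distrib, Finset.sum_div]
      apply Finset.sum_congr rfl
      intro x _
      simp only [pbChi_insert S i hi]
      linear_combination (pbSg (x i) * pbChi S x) * pb_point f i x +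
        ((f (Function.update x i true) - f (Function.update x i false)) / 2 *
        pbChi S x) * pbSg_sq (x i)
    simp only [pbFourier_eq]
    rw [hs]; ring
  rw [h, h1, h2]; ring

theorem pb_sum_pair {n : ℕ} (G : Finset (Fin n) → ℝ) (i : Fin n) :
    ∑ S, G S = ∑ S ∈ (Finset.univ.erase i).powerset, (G S + G (insert i S)) := by
  rw [Finset.sum_add_distrib, ← Finset.sum_powerset_insert (Finset.notMem_erase i _),
    Finset.insert_erase (Finset.mem_univ i), Finset.powerset_univ]

theorem pb_phi1 {n : ℕ} (f : (Fin n → Bool) → ℝ) (i : Fin n) :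
    ∑ S, |pbFourier f S| ≤ ∑ S, |pbFourier (fun x => f (Function.update x i true)) S| +
      ∑ S, |pbFourier (fun x => f (Function.update x i false)) S| := by
  rw [pb_sum_pair _ i, pb_sum_pair (fun S => |pbFourier (fun x => f (Function.update x i true)) S|) i,
    pb_sum_pair (fun S => |pbFourier (fun x => f (Function.update x i false)) S|) i,
    ← Finset.sum_add_distrib]
  apply Finset.sum_le_sum
  intro S hS
  have hi : i ∉ S := fun h => by simpa using (Finset.mem_powerset.1 hS) h
  rw [pb_vanish f S i hi, pb_vanish f S i hi, pb_f1 f S i hi, pb_f2 f S i hi]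
  set a := pbFourier (fun x => f (Function.update x i true)) S
  set b := pbFourier (fun x => f (Function.update x i false)) S
  rw [abs_zero, abs_div, abs_div, abs_two]
  have := abs_add_le a b
  have := abs_sub a b
  linarith

theorem pb_phi2 {n : ℕ} (f : (Fin n → Bool) → ℝ) (i : Fin n) :
    ∑ S : Finset (Fin n), 2 ^ S.card * pbFourier f S ^ 2 ≤
      ∑ S : Finset (Fin n), 2 ^ S.card * pbFourier (fun x => f (Function.update x i true)) S ^ 2 +
      ∑ S : Finset (Fin n), 2 ^ S.card * pbFourier (fun x => f (Function.update x i false)) S ^ 2 := by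
  rw [pb_sum_pair _ i, pb_sum_pair (fun S : Finset (Fin n) => 2 ^ S.card * pbFourier (fun x => f (Function.update x i true)) S ^ 2) i,
    pb_sum_pair (fun S : Finset (Fin n) => 2 ^ S.card * pbFourier (fun x => f (Function.update x i false)) S ^ 2) i,
    ← Finset.sum_add_distrib]
  apply Finset.sum_le_sum
  intro S hS
  have hi : i ∉ S := fun h => by simpa using (Finset.mem_powerset.1 hS) h
  rw [pb_vanish f S i hi, pb_vanish f S i hi, pb_f1 f S i hi, pb_f2 f S i hi,
    Finset.card_insert_of_notMem hi, pow_succ (2 : ℝ) S.card]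
  set a := pbFourier (fun x => f (Function.update x i true)) S
  set b := pbFourier (fun x => f (Function.update x i false)) S
  have h : ((a + b) / 2) ^ 2 + 2 * ((a - b) / 2) ^ 2 ≤ a ^ 2 + b ^ 2 := by
    nlinarith [sq_nonneg (a + b)]
  have := mul_le_mul_of_nonneg_left h (by positivity : (0 : ℝ) ≤ 2 ^ S.card)
  linarith

theorem pb_fourier_const {n : ℕ} (c : ℝ) (S : Finset (Fin n)) :
    pbFourier (fun _ => c) S = if S = ∅ then c else 0 := by
  have h : (fun _ : Fin n → Bool => c) = fun x => ∑ j ∈ ({()} : Finset Unit), c * pbChi ∅ x := by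
    funext x; simp [pbChi]
  rw [h, pb_fourier_sum ({()} : Finset Unit) (fun _ => c) (fun _ => pbChi ∅), Finset.sum_singleton,
    pb_fourier_chi]
  simp [eq_comm]

theorem pb_dl_of {n k r : ℕ} (hr : 1 ≤ r) (f : (Fin n → Bool) → ℝ) (hf : IsPBDNF k r f) :
    PBDL n k f := by
  obtain ⟨m, a, A, B, ha, hc, hfx⟩ := hf
  have hr' : (0 : ℝ) < r := by exact_mod_cast hr
  have key : ∀ s : Finset (Fin m), PBDL n k (fun x => 2 / r *
      ((s.sup fun t =>
        if (∀ i ∈ A t, x i = true) ∧ (∀ j ∈ B t, x j = false) then a t else 0 : ℕ) : ℝ) - 1) := by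
    intro s
    induction s using Finset.induction_on_max_value a with
    | empty =>
      have := PBDL.const (n := n) (k := k) (-1) (by simp)
      simpa using this
    | insert t s hts hmax ih =>
      by_cases hdis : Disjoint (A t) (B t)
      · have h := PBDL.cons (n := n) (k := k) (A t ∪ B t) (fun i => decide (i ∈ A t))
          (2 / r * (a t : ℝ) - 1) _ ((Finset.card_union_le _ _).trans (hc t)) (by
            have h1 : (a t : ℝ) ≤ r := by exact_mod_cast ha t
            have h2 : 2 / (r : ℝ) * a t ≤ 2 := by
              rw [div_mul_eq_mul_div, div_le_iff₀ hr']; linarith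
            have h3 : 0 ≤ 2 / (r : ℝ) * a t := by positivity
            rw [abs_le]; constructor <;> linarith) ih
        convert h using 1
        funext x
        have hiff : ((∀ i ∈ A t, x i = true) ∧ (∀ j ∈ B t, x j = false)) ↔
            ∀ i ∈ A t ∪ B t, x i = decide (i ∈ A t) := by
          constructor
          · rintro ⟨h1, h2⟩ i hi
            by_cases hA : i ∈ A t
            · simp [hA, h1 i hA]
            · have := (Finset.mem_union.1 hi).resolve_left hA
              simp [hA, h2 i this]
          · intro h
            refine ⟨fun i hi => ?_, fun j hj => ?_⟩
            · simpa [hi] using h i (Finset.mem_union_left _ hi)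
            · have hA : j ∉ A t := fun hA => Finset.disjoint_left.1 hdis hA hj
              simpa [hA] using h j (Finset.mem_union_right _ hj)
        rw [Finset.sup_insert]
        by_cases hT : (∀ i ∈ A t, x i = true) ∧ (∀ j ∈ B t, x j = false)
        · rw [if_pos hT, if_pos (hiff.1 hT), sup_eq_left.2]
          apply Finset.sup_le
          intro t' ht'
          split_ifs
          · exact hmax t' ht'
          · exact Nat.zero_le _
        · rw [if_neg hT, if_neg (fun h => hT (hiff.2 h))]
          simp
      · convert ih using 1
        funext x
        rw [Finset.sup_insert, if_neg]
        · simp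
        · rintro ⟨h1, h2⟩
          apply hdis
          rw [Finset.disjoint_left]
          intro i hA hB
          have := h1 i hA
          rw [h2 i hB] at this
          simp at this
  have := key Finset.univ
  have e : f = _ := funext hfx
  rw [e]; exact this

theorem pb_dl_zero {n : ℕ} (f : (Fin n → Bool) → ℝ) (hf : PBDL n 0 f) : ∃ c : ℝ, f = fun _ => c := by
  cases hf with
  | const c hc => exact ⟨c, rfl⟩
  | cons V s c f hV hc hf =>
    refine ⟨c, ?_⟩
    have : V = ∅ := Finset.card_eq_zero.1 (Nat.le_zero.1 hV)
    subst this
    simp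

theorem pb_num (k : ℕ) (hk : 1 ≤ k) (p : ℝ) (hp : p = 1 / (28 * (k : ℝ))) :
    (5 / 4 : ℝ) * (1 + 2 * (2 * p / (1 - p))) ^ k - (5 / 4 - 1) ≤ 5 / 4 := by
  have hk' : (1 : ℝ) ≤ k := by exact_mod_cast hk
  have hk0 : (0 : ℝ) < k := by linarith
  have hp0 : 0 < p := by rw [hp]; positivity
  have hkp : k * p = 1 / 28 := by rw [hp]; field_simp
  have hp1 : p ≤ 1 / 28 := by nlinarith
  have hq : 2 * (2 * p / (1 - p)) ≤ 4 / 27 / k := by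
    rw [← mul_div_assoc, div_le_div_iff₀ (by linarith) hk0]
    nlinarith
  have h1 : (1 + 2 * (2 * p / (1 - p))) ≤ Real.exp (4 / 27 / k) := by
    have := Real.add_one_le_exp (4 / 27 / (k : ℝ))
    linarith
  have hpos : 0 ≤ 1 + 2 * (2 * p / (1 - p)) := by
    have : 0 ≤ 2 * p / (1 - p) := div_nonneg (by linarith) (by linarith)
    linarith
  have h2 : (1 + 2 * (2 * p / (1 - p))) ^ k ≤ Real.exp (4 / 27) := by
    calc _ ≤ Real.exp (4 / 27 / k) ^ k := pow_le_pow_left₀ hpos h1 k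
      _ = Real.exp (4 / 27) := by
        rw [← Real.exp_nat_mul]; congr 1; field_simp
  have h3 : Real.exp (4 / 27) ≤ 27 / 23 := by
    have := Real.one_sub_le_exp_neg (4 / 27)
    have h4 : Real.exp (4 / 27) * Real.exp (-(4 / 27)) = 1 := by rw [← Real.exp_add]; simp
    have h5 := Real.exp_pos (4 / 27)
    nlinarith
  linarith

theorem pb_pow (k : ℕ) (hk : 1 ≤ k) (p : ℝ) (hp : p = 1 / (28 * (k : ℝ))) (y : ℝ) (hy : 1 ≤ y) :
    y ≤ (1 + p) ^ ⌈28 * (k : ℝ) * Real.logb 2 y⌉₊ := by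
  have hk' : (1 : ℝ) ≤ k := by exact_mod_cast hk
  have hp0 : 0 < p := by rw [hp]; positivity
  have h2 : (2 : ℝ) ≤ (1 + p) ^ (28 * (k : ℝ)) := by
    have h := one_add_mul_le_pow (by linarith : (-2 : ℝ) ≤ p) (28 * k)
    have e : (1 + p) ^ (28 * (k : ℝ)) = (1 + p) ^ (28 * k) := by
      rw [← Real.rpow_natCast]; push_cast; rfl
    rw [e]
    have : ((28 * k : ℕ) : ℝ) * p = 1 := by rw [hp]; push_cast; field_simp
    linarith
  have hl : 0 ≤ Real.logb 2 y := Real.logb_nonneg (by norm_num) hy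
  calc y = 2 ^ Real.logb 2 y := (Real.rpow_logb (by norm_num) (by norm_num) (by linarith)).symm
    _ ≤ ((1 + p) ^ (28 * (k : ℝ))) ^ Real.logb 2 y := Real.rpow_le_rpow (by norm_num) h2 hl
    _ = (1 + p) ^ (28 * (k : ℝ) * Real.logb 2 y) := 
        (Real.rpow_mul (by linarith : (0:ℝ) ≤ 1 + p) (28 * (k:ℝ)) (Real.logb 2 y)).symm
    _ ≤ (1 + p) ^ ((⌈28 * (k : ℝ) * Real.logb 2 y⌉₊ : ℕ) : ℝ) :=
        Real.rpow_le_rpow_of_exponent_le (by linarith) (Nat.le_ceil _)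
    _ = _ := Real.rpow_natCast _ _

/-- final selection of large low-degree coefficients -/
theorem pb_select {n : ℕ} (f : (Fin n → Bool) → ℝ) (τ : ℕ) (L ε : ℝ) (hL : 0 < L) (hε : 0 < ε)
    (h1 : ∑ S : Finset (Fin n) with S.card ≤ τ, |pbFourier f S| ≤ L)
    (h2 : ∑ S : Finset (Fin n) with ¬ S.card ≤ τ, pbFourier f S ^ 2 ≤ 5 / 8 * ε) :
    ∃ g : (Fin n → Bool) → ℝ,
      (((Set.ncard {S : Finset (Fin n) | pbFourier g S ≠ 0}) : ℝ) ≤ 4 * L ^ 2 / ε) ∧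
      (∑ x : Fin n → Bool, (f x - g x) ^ 2) / 2 ^ n ≤ ε := by
  classical
  set θ := ε / (4 * L) with hθ
  have hθ0 : 0 < θ := by positivity
  set H : Finset (Finset (Fin n)) :=
    Finset.univ.filter (fun S => S.card ≤ τ ∧ θ ≤ |pbFourier f S|) with hH
  have hg : ∀ T, pbFourier (fun x => ∑ S ∈ H, pbFourier f S * pbChi S x) T =
      if T ∈ H then pbFourier f T else 0 := by
    intro T
    rw [pb_fourier_sum]
    simp only [pb_fourier_chi]
    simp
  refine ⟨fun x => ∑ S ∈ H, pbFourier f S * pbChi S x, ?_, ?_⟩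
  · have hsub : {S : Finset (Fin n) | pbFourier (fun x => ∑ S ∈ H, pbFourier f S * pbChi S x) S ≠ 0}
        ⊆ (H : Set (Finset (Fin n))) := by
      intro S hS
      by_contra hSH
      apply hS
      rw [hg, if_neg (fun h => hSH (Finset.mem_coe.2 h))]
    have hcard : (Set.ncard {S : Finset (Fin n) | pbFourier (fun x => ∑ S ∈ H, pbFourier f S * pbChi S x) S ≠ 0}) ≤ H.card := by
      rw [← Set.ncard_coe_finset]
      exact Set.ncard_le_ncard hsub (Finset.finite_toSet _)
    have hHL : (H.card : ℝ) * θ ≤ L := by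
      calc (H.card : ℝ) * θ = ∑ S ∈ H, θ := by simp
        _ ≤ ∑ S ∈ H, |pbFourier f S| := by
          apply Finset.sum_le_sum
          intro S hS
          exact (Finset.mem_filter.1 hS).2.2
        _ ≤ ∑ S : Finset (Fin n) with S.card ≤ τ, |pbFourier f S| := by
          apply Finset.sum_le_sum_of_subset_of_nonneg
          · intro S hS
            exact Finset.mem_filter.2 ⟨Finset.mem_univ _, (Finset.mem_filter.1 hS).2.1⟩
          · intros; positivity
        _ ≤ L := h1
    have : (H.card : ℝ) ≤ L / θ := by rwa [le_div_iff₀ hθ0]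
    have e : L / θ = 4 * L ^ 2 / ε := by rw [hθ]; field_simp
    rw [← e]
    exact le_trans (by exact_mod_cast hcard) this
  · have hpar := pb_parseval (fun x => f x - ∑ S ∈ H, pbFourier f S * pbChi S x)
    rw [hpar]
    have hd : ∀ T, pbFourier (fun x => f x - ∑ S ∈ H, pbFourier f S * pbChi S x) T =
        if T ∈ H then 0 else pbFourier f T := by
      intro T
      have : pbFourier (fun x => f x - ∑ S ∈ H, pbFourier f S * pbChi S x) T =
          pbFourier f T - pbFourier (fun x => ∑ S ∈ H, pbFourier f S * pbChi S x) T := by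
        simp only [pbFourier_eq]
        rw [← sub_div, ← Finset.sum_sub_distrib]
        simp only [sub_mul]
      rw [this, hg]
      split_ifs <;> ring
    simp only [hd]
    rw [← Finset.sum_filter_add_sum_filter_not Finset.univ (fun S : Finset (Fin n) => S.card ≤ τ)]
    have hlow : ∑ S : Finset (Fin n) with S.card ≤ τ, (if S ∈ H then 0 else pbFourier f S) ^ 2 ≤
        θ * L := by
      calc _ ≤ ∑ S : Finset (Fin n) with S.card ≤ τ, θ * |pbFourier f S| := by
            apply Finset.sum_le_sum
            intro S hS
            have hS' := (Finset.mem_filter.1 hS).2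
            split_ifs with hSH
            · simp; positivity
            · have : |pbFourier f S| < θ := by
                by_contra! h
                exact hSH (Finset.mem_filter.2 ⟨Finset.mem_univ _, hS', h⟩)
              rw [← sq_abs, sq]
              exact mul_le_mul_of_nonneg_right this.le (abs_nonneg _)
        _ = θ * ∑ S : Finset (Fin n) with S.card ≤ τ, |pbFourier f S| := by rw [Finset.mul_sum]
        _ ≤ θ * L := mul_le_mul_of_nonneg_left h1 hθ0.le
    have hhigh : ∑ S : Finset (Fin n) with ¬ S.card ≤ τ, (if S ∈ H then 0 else pbFourier f S) ^ 2 ≤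
        5 / 8 * ε := by
      refine le_trans (Finset.sum_le_sum ?_) h2
      intro S _
      split_ifs
      · simp; positivity
      · exact le_rfl
    have e : θ * L = ε / 4 := by rw [hθ]; field_simp
    linarith

/-- every `f ∈ DNF^{k,r}` is `ε`-approximated (in expected square
error under the uniform distribution) by an `M`-sparse function `g` with
`M ≤ 32r²(28k)^{2τ}/ε`, where `τ = ⌈28k·log₂(2r/ε)⌉`. -/
theorem pbdnf_sparse_approximation (n k r : ℕ) (hr : 1 ≤ r)
    (ε : ℝ) (hε0 : 0 < ε) (hε1 : ε ≤ 1)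
    (f : (Fin n → Bool) → ℝ) (hf : IsPBDNF k r f) :
    ∃ g : (Fin n → Bool) → ℝ,
      (((Set.ncard {S : Finset (Fin n) | pbFourier g S ≠ 0}) : ℝ)
        ≤ 32 * (r : ℝ) ^ 2 *
            (28 * (k : ℝ)) ^ (2 * ⌈28 * (k : ℝ) * Real.logb 2 (2 * r / ε)⌉₊) / ε) ∧
      (∑ x : Fin n → Bool, (f x - g x) ^ 2) / 2 ^ n ≤ ε := by
  have hdl := pb_dl_of hr f hf
  have hr' : (1 : ℝ) ≤ r := by exact_mod_cast hr
  rcases Nat.eq_zero_or_pos k with hk | hk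
  · subst hk
    obtain ⟨c, rfl⟩ := pb_dl_zero f hdl
    refine ⟨fun _ => c, ?_, by simp; exact hε0.le⟩
    have hsub : {S : Finset (Fin n) | pbFourier (fun _ => c) S ≠ 0} ⊆ {∅} := by
      intro S hS
      by_contra h
      apply hS
      rw [pb_fourier_const, if_neg (fun h2 => h (by simpa using h2))]
    have h1 := Set.ncard_le_ncard hsub (Set.finite_singleton _)
    rw [Set.ncard_singleton] at h1
    have h2 : ((Set.ncard {S : Finset (Fin n) | pbFourier (fun _ => c) S ≠ 0}) : ℝ) ≤ 1 := by
      exact_mod_cast h1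
    refine h2.trans ?_
    simp only [Nat.cast_zero, mul_zero, zero_mul, Nat.ceil_zero, pow_zero, mul_one]
    rw [le_div_iff₀ hε0]
    nlinarith
  · have hk' : (1 : ℝ) ≤ k := by exact_mod_cast hk
    set y : ℝ := 2 * r / ε with hy
    have hy2 : 2 / ε ≤ y := by rw [hy]; gcongr; linarith
    have hy1 : 1 ≤ y := le_trans (by rw [le_div_iff₀ hε0]; linarith) hy2
    set τ := ⌈28 * (k : ℝ) * Real.logb 2 y⌉₊ with hτ
    obtain ⟨p, hp⟩ : ∃ p : ℝ, p = 1 / (28 * (k : ℝ)) := ⟨_, rfl⟩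
    have hp0 : 0 < p := by rw [hp]; positivity
    have hkp : 28 * k * p = 1 := by rw [hp]; field_simp
    have hp1 : p ≤ 1 / 28 := by nlinarith
    have hW0 := fun ρ : Fin n → Option Bool => pbW_nonneg p hp0.le (by linarith) ρ
    have hbound := pb_dl_bound (n := n) (k := k) (pbW p) hW0
      (2 * p / (1 - p)) (5 / 4) (div_nonneg (by linarith) (by linarith)) (by norm_num)
      (fun ρ i b h => pbW_update p (by linarith) ρ i b h) (pb_num k hk p hp)
    have hb1 := hbound (fun f => ∑ S, |pbFourier f S|) pb_phi1 (by
      intro c hc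
      simp only [pb_fourier_const]
      simpa [apply_ite] using hc) f hdl
    have hb2 := hbound (fun f => ∑ S : Finset (Fin n), 2 ^ S.card * pbFourier f S ^ 2) pb_phi2 (by
      intro c hc
      simp only [pb_fourier_const]
      simpa [ite_pow] using hc) f hdl
    rw [pbW_total] at hb1 hb2
    rw [pb_E2] at hb2
    have hL1 : ∑ S : Finset (Fin n), p ^ S.card * |pbFourier f S| ≤ 5 / 4 := by
      refine le_trans ?_ (hb1.trans (by norm_num))
      simp only [Finset.mul_sum]
      rw [Finset.sum_comm]
      apply Finset.sum_le_sum
      intro S _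
      have e : p ^ S.card * |pbFourier f S| = |p ^ S.card * pbFourier f S| := by
        rw [abs_mul, abs_of_pos (pow_pos hp0 _)]
      rw [e, ← pb_E1]
      refine (Finset.abs_sum_le_sum_abs _ _).trans (Finset.sum_le_sum fun ρ _ => ?_)
      rw [abs_mul, abs_of_nonneg (hW0 ρ)]
    have hKpos : (0 : ℝ) < (28 * k) ^ τ := by positivity
    obtain ⟨g, hg1, hg2⟩ := pb_select f τ (5 / 4 * (28 * k) ^ τ) ε (by positivity) hε0 (by
      calc ∑ S : Finset (Fin n) with S.card ≤ τ, |pbFourier f S|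
          ≤ ∑ S : Finset (Fin n) with S.card ≤ τ, (28 * k) ^ τ * (p ^ S.card * |pbFourier f S|) := by
            apply Finset.sum_le_sum
            intro S hS
            have hS' := (Finset.mem_filter.1 hS).2
            have h1 : (1 : ℝ) ≤ (28 * k) ^ τ * p ^ S.card := by
              calc (1 : ℝ) = (28 * k * p) ^ τ := by rw [hkp, one_pow]
                _ = (28 * k) ^ τ * p ^ τ := mul_pow _ _ _
                _ ≤ _ := mul_le_mul_of_nonneg_left
                    (pow_le_pow_of_le_one hp0.le (by linarith) hS') hKpos.le
            rw [← mul_assoc]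
            exact le_mul_of_one_le_left (abs_nonneg _) h1
        _ ≤ ∑ S : Finset (Fin n), (28 * k) ^ τ * (p ^ S.card * |pbFourier f S|) := by
            apply Finset.sum_le_sum_of_subset_of_nonneg (Finset.subset_univ _)
            intros; positivity
        _ = (28 * k) ^ τ * ∑ S : Finset (Fin n), p ^ S.card * |pbFourier f S| := by
            rw [Finset.mul_sum]
        _ ≤ (28 * k) ^ τ * (5 / 4) := mul_le_mul_of_nonneg_left hL1 hKpos.le
        _ = _ := mul_comm _ _) (by
      have hpow : 2 / ε ≤ (1 + p) ^ τ := hy2.trans (pb_pow k hk p hp y hy1)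
      have h3 : (2 / ε) * ∑ S : Finset (Fin n) with ¬ S.card ≤ τ, pbFourier f S ^ 2 ≤ 5 / 4 := by
        rw [Finset.mul_sum]
        refine le_trans ?_ (hb2.trans (by norm_num))
        calc _ ≤ ∑ S : Finset (Fin n) with ¬ S.card ≤ τ, pbFourier f S ^ 2 * (1 + p) ^ S.card := by
              apply Finset.sum_le_sum
              intro S hS
              have hS' := (Finset.mem_filter.1 hS).2
              rw [mul_comm]
              refine mul_le_mul_of_nonneg_left (hpow.trans ?_) (sq_nonneg _)
              exact pow_le_pow_right₀ (by linarith) (by omega)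
          _ ≤ _ := by
              apply Finset.sum_le_sum_of_subset_of_nonneg (Finset.subset_univ _)
              intros; positivity
      rw [div_mul_eq_mul_div, div_le_iff₀ hε0] at h3
      linarith)
    refine ⟨g, hg1.trans ?_, hg2⟩
    apply div_le_div_of_nonneg_right _ hε0.le
    have e : (28 * (k : ℝ)) ^ (2 * τ) = ((28 * k) ^ τ) ^ 2 := by rw [mul_comm 2 τ, pow_mul]
    rw [e]
    have : 0 ≤ ((28 * (k : ℝ)) ^ τ) ^ 2 := by positivity
    have hr2 : (1 : ℝ) ≤ (r : ℝ) ^ 2 := one_le_pow₀ hr'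
    have h6 := mul_le_mul_of_nonneg_right hr2 this
    rw [mul_pow]
    nlinarith
end

section
/- For every function f ∈ DNF^{k,r} and every 0 < ε ≤ 1, the Fourier weight above level 28k·log₂(2r/ε) is small: ∑_{S ⊆ [n], |S| > 28k·log₂(2r/ε)} f̂(S)² ≤ ε/2. -/
namespace PBTail

open Finset

abbrev Cube (n : ℕ) := Fin n → Bool

noncomputable def chi {n : ℕ} (S : Finset (Fin n)) (x : Cube n) : ℝ :=
  ∏ i ∈ S, (if x i then (1 : ℝ) else -1)

lemma chi_abs {n : ℕ} (S : Finset (Fin n)) (x : Cube n) : |chi S x| = 1 := by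
  unfold chi
  rw [Finset.abs_prod]
  apply Finset.prod_eq_one
  intro i _
  split_ifs <;> simp

lemma chi_sq {n : ℕ} (S : Finset (Fin n)) (x : Cube n) : chi S x * chi S x = 1 := by
  rw [← abs_mul_abs_self, chi_abs]; norm_num

lemma chi_congr {n : ℕ} (S : Finset (Fin n)) (x y : Cube n) (h : ∀ i ∈ S, x i = y i) :
    chi S x = chi S y := by
  unfold chi
  apply Finset.prod_congr rfl
  intro i hi
  rw [h i hi]

lemma chi_split {n : ℕ} (J S : Finset (Fin n)) (h : J ⊆ S) (x : Cube n) :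
    chi S x = chi J x * chi (S \ J) x := by
  unfold chi
  rw [mul_comm, Finset.prod_sdiff h]

/-- double averaging -/
lemma dbl {n : ℕ} (K : Finset (Fin n)) (F : Cube n → ℝ) :
    ∑ v : Cube n, ∑ w : Cube n, F (K.piecewise v w) = 2 ^ n * ∑ w, F w := by
  have hinv : Function.Involutive
      (fun p : Cube n × Cube n => (K.piecewise p.1 p.2, K.piecewise p.2 p.1)) := by
    rintro ⟨v, w⟩
    ext i <;> by_cases hi : i ∈ K <;> simp [Finset.piecewise, hi]
  rw [← Fintype.sum_prod_type']
  have := Equiv.sum_comp (hinv.toPerm _) (fun p : Cube n × Cube n => F p.1)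
  simp only [Function.Involutive.coe_toPerm] at this
  rw [this, Fintype.sum_prod_type]
  simp [Finset.mul_sum]

lemma sum_chi {n : ℕ} (J : Finset (Fin n)) (hJ : J.Nonempty) :
    ∑ w : Cube n, chi J w = 0 := by
  obtain ⟨a, ha⟩ := hJ
  have hinv : Function.Involutive
      (fun p : Cube n => Function.update p a (!p a)) := by
    intro p
    ext i
    by_cases h : i = a
    · subst h; simp
    · simp [h]
  have h1 := Equiv.sum_comp (hinv.toPerm _) (fun w : Cube n => chi J w)
  have h2 : ∀ w : Cube n, chi J (Function.update w a (!w a)) = - chi J w := by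
    intro w
    unfold chi
    rw [← Finset.mul_prod_erase _ _ ha, ← Finset.mul_prod_erase _ _ ha, ← neg_mul]
    congr 1
    · cases w a <;> simp
    · apply Finset.prod_congr rfl
      intro i hi
      rw [Function.update_of_ne (Finset.ne_of_mem_erase hi)]
  simp only [Function.Involutive.coe_toPerm, h2, Finset.sum_neg_distrib] at h1
  linarith

lemma sum_chi_mul {n : ℕ} (x y : Cube n) :
    ∑ S : Finset (Fin n), chi S x * chi S y = if x = y then (2:ℝ) ^ n else 0 := by
  unfold chi
  simp_rw [← Finset.prod_mul_distrib]
  have := Finset.prod_one_add (Finset.univ : Finset (Fin n)) (f :=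
    fun i => (if x i then (1 : ℝ) else -1) * (if y i then (1 : ℝ) else -1))
  rw [Finset.powerset_univ] at this
  rw [← this]
  split_ifs with h
  · subst h
    rw [Finset.prod_congr rfl (g := fun _ => (2:ℝ))]
    · simp
    · intro i _
      split_ifs <;> norm_num
  · obtain ⟨i, hi⟩ := Function.ne_iff.mp h
    apply Finset.prod_eq_zero (Finset.mem_univ i)
    revert hi
    cases x i <;> cases y i <;> simp

/-- Parseval, unnormalised -/
lemma parseval {n : ℕ} (h : Cube n → ℝ) :
    ∑ S : Finset (Fin n), (∑ x, h x * chi S x) ^ 2 = 2 ^ n * ∑ x, h x ^ 2 := by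
  have : ∀ S : Finset (Fin n), (∑ x, h x * chi S x) ^ 2
      = ∑ x, ∑ y, h x * h y * (chi S x * chi S y) := by
    intro S
    rw [sq, Finset.sum_mul_sum]
    refine Finset.sum_congr rfl fun x _ => Finset.sum_congr rfl fun y _ => by ring
  simp_rw [this]
  rw [Finset.sum_comm, Finset.mul_sum]
  refine Finset.sum_congr rfl fun x _ => ?_
  rw [Finset.sum_comm]
  simp_rw [← Finset.mul_sum, sum_chi_mul]
  simp
  ring

inductive Good {n m : ℕ} (sat : Fin m → Cube n → Prop) (V : Fin m → Finset (Fin n)) :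
    Cube n → Finset (Fin n) → Prop
  | nil (y : Cube n) : Good sat V y ∅
  | cons (y y' : Cube n) (J K : Finset (Fin n)) (t : Fin m) (hK : K.Nonempty) (hKJ : K ⊆ J)
      (hKV : K ⊆ V t) (hs : sat t y') (hmin : ∀ t' < t, ¬ sat t' y')
      (hy : ∀ i, i ∉ K → y' i = y i) (hg : Good sat V y' (J \ K)) : Good sat V y J

section
variable {n m : ℕ} (sat : Fin m → Cube n → Prop) (V : Fin m → Finset (Fin n))

lemma good_step (hdep : ∀ t x y, (∀ i ∈ V t, x i = y i) → sat t x → sat t y) (t1 : Fin m)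
    (y : Cube n) (J' : Finset (Fin n)) (hg : Good sat V y J') :
    ∀ J, J' = J \ V t1 → (J ∩ V t1).Nonempty → (∃ w, sat t1 (J.piecewise w y)) →
      (∀ t' < t1, ∀ w, ¬ sat t' (J.piecewise w y)) → Good sat V y J := by
  induction hg with
  | nil y =>
    rintro J hJ hne ⟨w, hw⟩ hmin
    have hsub : J ⊆ V t1 := Finset.sdiff_eq_empty_iff_subset.mp hJ.symm
    refine Good.cons y (J.piecewise w y) J J t1 (hne.mono Finset.inter_subset_left)
      (Finset.Subset.refl _) hsub hw (fun t' ht' => hmin t' ht' w) ?_ ?_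
    · intro i hi; simp [hi]
    · rw [Finset.sdiff_self]; exact Good.nil _
  | cons y y' J' K t hK hKJ hKV hs hmin hy hg ih =>
    rintro J hJ hne ⟨w, hw⟩ hmin1
    subst hJ
    have hKJ0 : K ⊆ J := hKJ.trans Finset.sdiff_subset
    have hKd : ∀ i ∈ K, i ∉ V t1 := fun i hi => (Finset.mem_sdiff.mp (hKJ hi)).2
    refine Good.cons y y' J K t hK hKJ0 hKV hs hmin hy (ih (J \ K) ?_ ?_ ?_ ?_)
    · ext i; simp only [Finset.mem_sdiff]; tauto
    · obtain ⟨i, hi⟩ := hne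
      rw [Finset.mem_inter] at hi
      exact ⟨i, by simp only [Finset.mem_inter, Finset.mem_sdiff]
                   exact ⟨⟨hi.1, fun h => hKd i h hi.2⟩, hi.2⟩⟩
    · refine ⟨w, hdep _ _ _ ?_ hw⟩
      intro i hi
      have hiK : i ∉ K := fun h => hKd i h hi
      by_cases hiJ : i ∈ J
      · simp [Finset.piecewise, hiJ, hiK]
      · simp [Finset.piecewise, hiJ, hy i hiK]
    · intro t' ht' w'
      have : (J \ K).piecewise w' y' = J.piecewise (K.piecewise y' w') y := by
        ext i
        by_cases hiK : i ∈ K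
        · simp [Finset.piecewise, hiK, hKJ0 hiK]
        · by_cases hiJ : i ∈ J
          · simp [Finset.piecewise, hiJ, hiK]
          · simp [Finset.piecewise, hiJ, hy i hiK]
      rw [this]
      exact hmin1 t' ht' _

open Classical in
noncomputable def gd (y : Cube n) (J : Finset (Fin n)) : ℝ := if Good sat V y J then 1 else 0

open Classical in
noncomputable def orf (x : Cube n) : ℝ := if ∃ t, sat t x then 1 else 0

lemma gd_nonneg (y : Cube n) (J : Finset (Fin n)) : 0 ≤ gd sat V y J := by
  unfold gd; split_ifs <;> norm_num

lemma orf_nonneg (y : Cube n) : 0 ≤ orf sat y := by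
  unfold orf; split_ifs <;> norm_num

lemma orf_le (y : Cube n) : orf sat y ≤ 1 := by
  unfold orf; split_ifs <;> norm_num

lemma deriv_le (hdep : ∀ t x y, (∀ i ∈ V t, x i = y i) → sat t x → sat t y)
    (J : Finset (Fin n)) : ∀ y : Cube n,
    |∑ w, orf sat (J.piecewise w y) * chi J w| ≤ ∑ w, gd sat V (J.piecewise w y) J := by
  classical
  induction J using Finset.strongInduction with
  | H J ih =>
  intro y
  rcases J.eq_empty_or_nonempty with rfl | hJ
  · refine (Finset.abs_sum_le_sum_abs _ _).trans (Finset.sum_le_sum fun w _ => ?_)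
    rw [abs_mul, chi_abs, mul_one, abs_of_nonneg (orf_nonneg _ _)]
    refine (orf_le _ _).trans ?_
    simp [gd, Good.nil]
  by_cases hex : ∃ t, ∃ w, sat t (J.piecewise w y)
  swap
  · push Not at hex
    have : ∀ w, orf sat (J.piecewise w y) = 0 := by
      intro w
      unfold orf
      rw [if_neg]
      rintro ⟨t, ht⟩
      exact hex t w ht
    simp only [this, zero_mul, Finset.sum_const_zero, abs_zero]
    exact Finset.sum_nonneg fun w _ => gd_nonneg _ _ _ _
  obtain ⟨t1, ht1, hmin⟩ : ∃ t1, (∃ w, sat t1 (J.piecewise w y)) ∧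
      ∀ t' < t1, ∀ w, ¬ sat t' (J.piecewise w y) := by
    obtain ⟨t1, h1, h2⟩ := WellFounded.has_min (wellFounded_lt (α := Fin m))
      {t | ∃ w, sat t (J.piecewise w y)} hex
    refine ⟨t1, h1, fun t' ht' w hw => h2 t' ⟨w, hw⟩ ht'⟩
  rcases (J ∩ V t1).eq_empty_or_nonempty with hemp | hne
  · obtain ⟨w0, hw0⟩ := ht1
    have : ∀ w, orf sat (J.piecewise w y) = 1 := by
      intro w
      unfold orf
      rw [if_pos]
      refine ⟨t1, hdep _ _ _ ?_ hw0⟩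
      intro i hi
      have : i ∉ J := fun h => by
        have : i ∈ J ∩ V t1 := Finset.mem_inter.mpr ⟨h, hi⟩
        simp [hemp] at this
      simp [this]
    simp only [this, one_mul, sum_chi J hJ, abs_zero]
    exact Finset.sum_nonneg fun w _ => gd_nonneg _ _ _ _
  · set J1 := J ∩ V t1 with hJ1
    have hJ1J : J1 ⊆ J := Finset.inter_subset_left
    have hJ'eq : J \ J1 = J \ V t1 := by
      ext i; simp only [hJ1, Finset.mem_sdiff, Finset.mem_inter]; tauto
    have hss : J \ J1 ⊂ J := Finset.sdiff_ssubset hJ1J hne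
    have hpw : ∀ v w : Cube n, J.piecewise (J1.piecewise v w) y
        = (J \ J1).piecewise w (J1.piecewise v y) := by
      intro v w
      ext i
      by_cases h1 : i ∈ J1
      · simp [Finset.piecewise, h1, hJ1J h1]
      · by_cases h2 : i ∈ J <;> simp [Finset.piecewise, h1, h2]
    have hpos : (0:ℝ) < 2 ^ n := by positivity
    have e1 := dbl J1 (fun w => orf sat (J.piecewise w y) * chi J w)
    have e2 := dbl J1 (fun w => gd sat V (J.piecewise w y) J)
    have key : |∑ v : Cube n, ∑ w : Cube n,
        orf sat (J.piecewise (J1.piecewise v w) y) * chi J (J1.piecewise v w)| ≤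
        ∑ v : Cube n, ∑ w : Cube n, gd sat V (J.piecewise (J1.piecewise v w) y) J := by
      refine (Finset.abs_sum_le_sum_abs _ _).trans (Finset.sum_le_sum fun v _ => ?_)
      have : ∑ w : Cube n,
          orf sat (J.piecewise (J1.piecewise v w) y) * chi J (J1.piecewise v w)
          = chi J1 v * ∑ w, orf sat ((J \ J1).piecewise w (J1.piecewise v y))
              * chi (J \ J1) w := by
        rw [Finset.mul_sum]
        refine Finset.sum_congr rfl fun w _ => ?_
        rw [hpw, chi_split J1 J hJ1J, chi_congr J1 (J1.piecewise v w) v,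
          chi_congr (J \ J1) (J1.piecewise v w) w]
        · ring
        · intro i hi; simp [(Finset.mem_sdiff.mp hi).2]
        · intro i hi; simp [hi]
      rw [this, abs_mul, chi_abs, one_mul]
      refine (ih _ hss _).trans (Finset.sum_le_sum fun w _ => ?_)
      rw [hpw]
      unfold gd
      by_cases hG : Good sat V ((J \ J1).piecewise w (J1.piecewise v y)) (J \ J1)
      · have hback : ∀ w', J.piecewise w' ((J \ J1).piecewise w (J1.piecewise v y))
            = J.piecewise w' y := by
          intro w'
          rw [← hpw]
          ext i
          by_cases h2 : i ∈ J <;> simp [Finset.piecewise, h2]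
        have := good_step sat V hdep t1 _ _ hG J hJ'eq hne
          (by simpa only [hback] using ht1) (by simpa only [hback] using hmin)
        simp [hG, this]
      · simp only [hG, if_false]
        split_ifs <;> norm_num
    rw [e1, e2, abs_mul, abs_of_pos hpos] at key
    exact le_of_mul_le_mul_left key hpos

lemma weight_le (hdep : ∀ t x y, (∀ i ∈ V t, x i = y i) → sat t x → sat t y)
    (J : Finset (Fin n)) :
    ∑ S ∈ univ.filter (fun S => J ⊆ S), (pbFourier (orf sat) S) ^ 2
      ≤ (∑ y, gd sat V y J) / 2 ^ n := by
  classical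
  have hpos : (0:ℝ) < 2 ^ n := by positivity
  set D : Cube n → ℝ := fun y => ∑ w, orf sat (J.piecewise w y) * chi J w with hD
  have hDabs : ∀ y, |D y| ≤ 2 ^ n := by
    intro y
    refine (Finset.abs_sum_le_sum_abs _ _).trans ?_
    calc _ ≤ ∑ w : Cube n, (1:ℝ) := Finset.sum_le_sum fun w _ => by
            rw [abs_mul, chi_abs, mul_one, abs_of_nonneg (orf_nonneg _ _)]; exact orf_le _ _
      _ = 2 ^ n := by simp
  have hcoef : ∀ S, J ⊆ S → ∑ y, (D y * chi J y) * chi S y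
      = 2 ^ n * (2 ^ n * pbFourier (orf sat) S) := by
    intro S hS
    have e := dbl J (fun x => orf sat x * chi S x)
    have e3 : 2 ^ n * pbFourier (orf sat) S = ∑ x, orf sat x * chi S x := by
      unfold pbFourier chi; field_simp
    rw [e3, ← e, Finset.sum_comm]
    refine Finset.sum_congr rfl fun y _ => ?_
    rw [hD]
    simp only
    rw [Finset.sum_mul, Finset.sum_mul]
    refine Finset.sum_congr rfl fun w _ => ?_
    rw [chi_split J S hS y, chi_split J S hS (J.piecewise w y),
      chi_congr J (J.piecewise w y) w, chi_congr (S \ J) (J.piecewise w y) y]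
    · linear_combination (orf sat (J.piecewise w y) * chi J w * chi (S \ J) y) * chi_sq J y
    · intro i hi; simp [(Finset.mem_sdiff.mp hi).2]
    · intro i hi; simp [hi]
  have hpars := parseval (fun y => D y * chi J y)
  have h1 : ∑ S ∈ univ.filter (fun S => J ⊆ S), (2 ^ n * (2 ^ n * pbFourier (orf sat) S)) ^ 2
      ≤ 2 ^ n * ∑ x, (D x * chi J x) ^ 2 := by
    rw [← hpars]
    calc _ = ∑ S ∈ univ.filter (fun S => J ⊆ S), (∑ y, (D y * chi J y) * chi S y) ^ 2 :=
          Finset.sum_congr rfl fun S hS => by rw [hcoef S (Finset.mem_filter.mp hS).2]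
      _ ≤ _ := Finset.sum_le_sum_of_subset_of_nonneg (Finset.filter_subset _ _)
          (fun _ _ _ => sq_nonneg _)
  have h2 : ∑ x, (D x * chi J x) ^ 2 ≤ 2 ^ n * (2 ^ n * ∑ y, gd sat V y J) := by
    rw [← dbl J (fun y => gd sat V y J), Finset.sum_comm, Finset.mul_sum]
    refine Finset.sum_le_sum fun y _ => ?_
    have := deriv_le sat V hdep J y
    calc (D y * chi J y) ^ 2 = |D y| * |D y| := by
          rw [abs_mul_abs_self]; linear_combination (D y) ^ 2 * chi_sq J y
      _ ≤ 2 ^ n * |D y| := by gcongr; exact hDabs y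
      _ ≤ _ := by gcongr
  have h3 : ∑ S ∈ univ.filter (fun S => J ⊆ S), (2 ^ n * (2 ^ n * pbFourier (orf sat) S)) ^ 2
      = (2 ^ n) ^ 4 * ∑ S ∈ univ.filter (fun S => J ⊆ S), (pbFourier (orf sat) S) ^ 2 := by
    rw [Finset.mul_sum]
    refine Finset.sum_congr rfl fun S _ => by ring
  rw [h3] at h1
  rw [le_div_iff₀ hpos]
  have h4 : (2 ^ n) ^ 3 * ((∑ S ∈ univ.filter (fun S => J ⊆ S), (pbFourier (orf sat) S) ^ 2) * 2 ^ n)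
      ≤ (2 ^ n) ^ 3 * ∑ y, gd sat V y J := by
    calc _ = (2 ^ n) ^ 4 * ∑ S ∈ univ.filter (fun S => J ⊆ S), (pbFourier (orf sat) S) ^ 2 := by ring
      _ ≤ 2 ^ n * ∑ x, (D x * chi J x) ^ 2 := h1
      _ ≤ 2 ^ n * (2 ^ n * (2 ^ n * ∑ y, gd sat V y J)) := by gcongr
      _ = _ := by ring
  exact le_of_mul_le_mul_left h4 (by positivity)

lemma card_agree (K : Finset (Fin n)) (y' : Cube n) :
    (univ.filter (fun y : Cube n => ∀ i, i ∉ K → y' i = y i)).card = 2 ^ K.card := by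
  classical
  have : univ.filter (fun y : Cube n => ∀ i, i ∉ K → y' i = y i)
      = Fintype.piFinset (fun i => if i ∈ K then (univ : Finset Bool) else {y' i}) := by
    ext y
    simp only [Finset.mem_filter, Finset.mem_univ, true_and, Fintype.mem_piFinset]
    refine forall_congr' fun i => ?_
    by_cases h : i ∈ K
    · simp [h]
    · simp only [h, not_false_eq_true, if_false, Finset.mem_singleton, true_imp_iff]
      exact eq_comm
  rw [this, Fintype.card_piFinset]
  simp only [apply_ite Finset.card, Finset.card_univ, Fintype.card_bool, Finset.card_singleton]
  rw [Finset.prod_ite]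
  simp

lemma sum_pow_card {α : Type*} [DecidableEq α] (S : Finset α) (z : ℝ) :
    ∑ J ∈ S.powerset, z ^ J.card = (1 + z) ^ S.card := by
  have := Finset.prod_one_add S (f := fun _ => z)
  simp only [Finset.prod_const] at this
  exact this.symm

lemma count_le (k : ℕ) (hV : ∀ t, (V t).card ≤ k) (z : ℝ) (hz : 0 ≤ z)
    (hq : (1 + 2 * z) ^ k ≤ 3 / 2) :
    ∑ y, ∑ J, z ^ J.card * gd sat V y J ≤ 2 * 2 ^ n := by
  classical
  have hU : ∃ U : Cube n → Finset (Fin n), (∀ y, (U y).card ≤ k) ∧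
      ∀ y t, sat t y → (∀ t' < t, ¬ sat t' y) → V t = U y := by
    have : ∀ y, ∃ U : Finset (Fin n), U.card ≤ k ∧
      ∀ t, sat t y → (∀ t' < t, ¬ sat t' y) → V t = U := by
      intro y
      by_cases h : ∃ t, sat t y ∧ (∀ t' < t, ¬ sat t' y)
      · obtain ⟨t, h1, h2⟩ := h
        refine ⟨V t, hV t, fun t' h1' h2' => ?_⟩
        rcases lt_trichotomy t t' with h | h | h
        · exact absurd h1 (h2' _ h)
        · rw [h]
        · exact absurd h1' (h2 _ h)
      · exact ⟨∅, by simp, fun t h1 h2 => absurd ⟨t, h1, h2⟩ h⟩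
    choose U h1 h2 using this
    exact ⟨U, h1, h2⟩
  obtain ⟨U, hUc, hUt⟩ := hU
  set G := ∑ y, ∑ J, z ^ J.card * gd sat V y J with hG
  let W : Cube n → Finset (Fin n) → Cube n → Finset (Fin n) → Finset (Fin n) → ℝ :=
    fun y J y' K J' => z ^ J'.card * z ^ K.card * gd sat V y' J' *
      ((if ∀ i, i ∉ K → y' i = y i then 1 else 0) * (if J = J' ∪ K then 1 else 0))
  have hW0 : ∀ y J y' K J', 0 ≤ W y J y' K J' := by
    intro y J y' K J'
    have := gd_nonneg sat V y' J'
    simp only [W]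
    apply mul_nonneg (by positivity)
    split_ifs <;> norm_num
  have hpt : ∀ y J, z ^ J.card * gd sat V y J ≤ (if J = ∅ then 1 else 0) +
      ∑ y', ∑ K ∈ (U y').powerset.erase ∅, ∑ J', W y J y' K J' := by
    intro y J
    have hn : 0 ≤ ∑ y', ∑ K ∈ (U y').powerset.erase ∅, ∑ J', W y J y' K J' :=
      Finset.sum_nonneg fun _ _ => Finset.sum_nonneg fun _ _ => Finset.sum_nonneg fun _ _ =>
        hW0 _ _ _ _ _
    by_cases hg : Good sat V y J
    · have hg1 : gd sat V y J = 1 := by simp [gd, hg]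
      rw [hg1, mul_one]
      cases hg with
      | nil => simpa using hn
      | cons _ y' _ K t hK hKJ hKV hs hmin hy hg' =>
        have hKU : K ∈ (U y').powerset.erase ∅ := by
          rw [← hUt y' t hs hmin]
          simp [hKV, hK.ne_empty]
        have hval : W y J y' K (J \ K) = z ^ J.card := by
          simp only [W, gd, if_pos hg', if_pos hy, Finset.sdiff_union_of_subset hKJ, if_true]
          rw [← pow_add, Finset.card_sdiff_add_card_eq_card hKJ]
          ring
        have h1 : W y J y' K (J \ K) ≤ ∑ J', W y J y' K J' :=
          Finset.single_le_sum (f := fun J' => W y J y' K J') (fun _ _ => hW0 _ _ _ _ _)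
            (Finset.mem_univ _)
        have h2 : ∑ J', W y J y' K J' ≤ ∑ K ∈ (U y').powerset.erase ∅, ∑ J', W y J y' K J' :=
          Finset.single_le_sum (f := fun K => ∑ J', W y J y' K J')
            (fun _ _ => Finset.sum_nonneg fun _ _ => hW0 _ _ _ _ _) hKU
        have h3 : ∑ K ∈ (U y').powerset.erase ∅, ∑ J', W y J y' K J' ≤
            ∑ y', ∑ K ∈ (U y').powerset.erase ∅, ∑ J', W y J y' K J' :=
          Finset.single_le_sum (f := fun y' => ∑ K ∈ (U y').powerset.erase ∅, ∑ J', W y J y' K J')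
            (fun _ _ => Finset.sum_nonneg fun _ _ => Finset.sum_nonneg fun _ _ => hW0 _ _ _ _ _)
            (Finset.mem_univ _)
        have h4 : (0:ℝ) ≤ (if J = ∅ then 1 else 0) := by split_ifs <;> norm_num
        linarith
    · have hg1 : gd sat V y J = 0 := by simp [gd, hg]
      rw [hg1, mul_zero]
      have h4 : (0:ℝ) ≤ (if J = ∅ then 1 else 0) := by split_ifs <;> norm_num
      linarith
  have hWsum : ∀ y' K J', ∑ y, ∑ J, W y J y' K J' =
      (2 * z) ^ K.card * (z ^ J'.card * gd sat V y' J') := by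
    intro y' K J'
    simp only [W, ← Finset.mul_sum]
    simp only [Finset.sum_ite_eq', Finset.sum_ite_eq, Finset.mem_univ, if_true, mul_one]
    rw [Finset.sum_boole, card_agree, mul_pow]
    push_cast
    ring
  have hGle : G ≤ 2 ^ n + 1 / 2 * G := by
    calc G ≤ ∑ y : Cube n, ∑ J, ((if J = ∅ then 1 else 0) +
          ∑ y', ∑ K ∈ (U y').powerset.erase ∅, ∑ J', W y J y' K J') :=
          Finset.sum_le_sum fun y _ => Finset.sum_le_sum fun J _ => hpt y J
      _ = 2 ^ n + ∑ y, ∑ J, ∑ y', ∑ K ∈ (U y').powerset.erase ∅, ∑ J', W y J y' K J' := by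
          simp only [Finset.sum_add_distrib]
          simp
      _ = 2 ^ n + ∑ y', ∑ K ∈ (U y').powerset.erase ∅, ∑ J', ∑ y, ∑ J, W y J y' K J' := by
          congr 1
          have : ∀ y, ∑ J, ∑ y', ∑ K ∈ (U y').powerset.erase ∅, ∑ J', W y J y' K J'
              = ∑ y', ∑ K ∈ (U y').powerset.erase ∅, ∑ J', ∑ J, W y J y' K J' := by
            intro y
            rw [Finset.sum_comm]
            refine Finset.sum_congr rfl fun y' _ => ?_
            rw [Finset.sum_comm]
            refine Finset.sum_congr rfl fun K _ => ?_
            rw [Finset.sum_comm]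
          simp_rw [this]
          rw [Finset.sum_comm]
          refine Finset.sum_congr rfl fun y' _ => ?_
          rw [Finset.sum_comm]
          refine Finset.sum_congr rfl fun K _ => ?_
          rw [Finset.sum_comm]
      _ = 2 ^ n + ∑ y', (∑ K ∈ (U y').powerset.erase ∅, (2 * z) ^ K.card) *
            ∑ J', z ^ J'.card * gd sat V y' J' := by
          congr 1
          refine Finset.sum_congr rfl fun y' _ => ?_
          simp_rw [hWsum, ← Finset.mul_sum, Finset.sum_mul]
      _ ≤ 2 ^ n + ∑ y', 1 / 2 * ∑ J', z ^ J'.card * gd sat V y' J' := by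
          gcongr with y' _
          · exact Finset.sum_nonneg fun J _ => mul_nonneg (by positivity) (gd_nonneg _ _ _ _)
          · have h1 := Finset.add_sum_erase (U y').powerset (fun K => (2 * z) ^ K.card)
              (Finset.empty_mem_powerset _)
            rw [sum_pow_card] at h1
            simp only [Finset.card_empty, pow_zero] at h1
            have h2 : (1 + 2 * z) ^ (U y').card ≤ (1 + 2 * z) ^ k :=
              pow_le_pow_right₀ (by linarith) (hUc y')
            linarith
      _ = 2 ^ n + 1 / 2 * G := by rw [hG, Finset.mul_sum]
  linarith

lemma main_le (hdep : ∀ t x y, (∀ i ∈ V t, x i = y i) → sat t x → sat t y)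
    (k : ℕ) (hV : ∀ t, (V t).card ≤ k) (z : ℝ) (hz : 0 ≤ z)
    (hq : (1 + 2 * z) ^ k ≤ 3 / 2) :
    ∑ S, (1 + z) ^ S.card * (pbFourier (orf sat) S) ^ 2 ≤ 2 := by
  classical
  have hpos : (0:ℝ) < 2 ^ n := by positivity
  have h0 := count_le sat V k hV z hz hq
  calc ∑ S, (1 + z) ^ S.card * (pbFourier (orf sat) S) ^ 2
      = ∑ S : Finset (Fin n), ∑ J : Finset (Fin n), (if J ⊆ S then z ^ J.card * (pbFourier (orf sat) S) ^ 2 else 0) := by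
        refine Finset.sum_congr rfl fun S _ => ?_
        rw [← sum_pow_card, Finset.sum_mul, ← Finset.sum_filter]
        refine Finset.sum_congr ?_ fun _ _ => rfl
        ext J; simp
    _ = ∑ J : Finset (Fin n), z ^ J.card *
          ∑ S ∈ univ.filter (fun S => J ⊆ S), (pbFourier (orf sat) S) ^ 2 := by
        rw [Finset.sum_comm]
        refine Finset.sum_congr rfl fun J _ => ?_
        rw [← Finset.sum_filter, Finset.mul_sum]
    _ ≤ ∑ J : Finset (Fin n), z ^ J.card * ((∑ y, gd sat V y J) / 2 ^ n) := by
        gcongr with J _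
        exact weight_le sat V hdep J
    _ = (∑ y, ∑ J, z ^ J.card * gd sat V y J) / 2 ^ n := by
        rw [Finset.sum_comm, Finset.sum_div]
        refine Finset.sum_congr rfl fun J _ => ?_
        rw [← Finset.mul_sum, mul_div_assoc]
    _ ≤ 2 := by rw [div_le_iff₀ hpos]; exact h0

end

lemma exists_z (k r : ℕ) (hr : 1 ≤ r) (ε : ℝ) (hε0 : 0 < ε) (hε1 : ε ≤ 1) :
    ∃ z : ℝ, 0 ≤ z ∧ (1 + 2 * z) ^ k ≤ 3 / 2 ∧ ∀ s : ℕ,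
      28 * (k : ℝ) * Real.logb 2 (2 * r / ε) < (s : ℝ) → 16 / ε ≤ (1 + z) ^ s := by
  rcases Nat.eq_zero_or_pos k with rfl | hk
  · refine ⟨16 / ε, by positivity, by norm_num, fun s hs => ?_⟩
    have hs : 1 ≤ s := by
      simp at hs; omega
    have h16 : 0 < 16 / ε := by positivity
    calc 16 / ε ≤ (1 + 16 / ε) ^ 1 := by linarith [pow_one (1 + 16 / ε)]
      _ ≤ _ := pow_le_pow_right₀ (by linarith) hs
  · have hk' : (0:ℝ) < k := by exact_mod_cast hk
    have hr' : (1:ℝ) ≤ r := by exact_mod_cast hr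
    refine ⟨1 / (8 * k), by positivity, ?_, fun s hs => ?_⟩
    · have h1 : 1 + 2 * (1 / (8 * (k:ℝ))) ≤ Real.exp (1 / (4 * k)) := by
        have := Real.add_one_le_exp (1 / (4 * (k:ℝ)))
        have e : 2 * (1 / (8 * (k:ℝ))) = 1 / (4 * k) := by field_simp; norm_num
        linarith
      have h2 : (1 + 2 * (1 / (8 * (k:ℝ)))) ^ k ≤ Real.exp (1 / 4) := by
        calc _ ≤ Real.exp (1 / (4 * k)) ^ k := by gcongr
          _ = Real.exp (1 / 4) := by
            rw [← Real.exp_nat_mul]; congr 1; field_simp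
      refine h2.trans ?_
      have h3 : Real.exp (1 / 4) ^ 4 = Real.exp 1 := by
        rw [← Real.exp_nat_mul]; norm_num
      have h4 := Real.exp_one_lt_d9
      refine le_of_pow_le_pow_left₀ (n := 4) (by norm_num) (by norm_num) ?_
      rw [h3]
      norm_num at h4 ⊢
      linarith
    · set L := Real.logb 2 (2 * r / ε) with hL
      have hx : 2 / ε ≤ 2 * r / ε := by gcongr; linarith
      have hx2 : 2 ≤ 2 / ε := by rw [le_div_iff₀ hε0]; linarith
      have hx0 : 0 < 2 * r / ε := by linarith
      have hL0 : 0 ≤ L := Real.logb_nonneg (by norm_num) (by linarith)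
      set b : ℝ := 1 + 1 / (8 * k) with hb
      have hb1 : 1 ≤ b := by rw [hb]; have : 0 < 1 / (8 * (k:ℝ)) := by positivity
                             linarith
      have hbk : (9 / 8 : ℝ) ≤ b ^ k := by
        have := one_add_mul_le_pow (a := 1 / (8 * (k:ℝ))) (by
          have : 0 < 1 / (8 * (k:ℝ)) := by positivity
          linarith) k
        have e : (k:ℝ) * (1 / (8 * (k:ℝ))) = 1 / 8 := by field_simp
        rw [e] at this
        linarith
      have hb28 : (16:ℝ) ≤ b ^ (28 * k) := by
        calc (16:ℝ) ≤ (9 / 8) ^ 28 := by norm_num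
          _ ≤ (b ^ k) ^ 28 := by gcongr
          _ = _ := by rw [← pow_mul, mul_comm]
      have h2L : (2:ℝ) ^ L = 2 * r / ε := Real.rpow_logb (by norm_num) (by norm_num) hx0
      calc 16 / ε ≤ (2 / ε) ^ 4 := by
            rw [div_pow, div_le_div_iff₀ hε0 (by positivity)]
            have : ε ^ 4 ≤ ε := by
              calc ε ^ 4 ≤ ε ^ 1 := pow_le_pow_of_le_one hε0.le hε1 (by norm_num)
                _ = ε := pow_one _
            nlinarith
        _ ≤ (2 * r / ε) ^ 4 := by gcongr
        _ = (16:ℝ) ^ L := by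
            rw [← h2L, ← Real.rpow_mul_natCast (by norm_num), mul_comm,
              Real.rpow_mul (by norm_num)]
            norm_num
        _ ≤ (b ^ (28 * k)) ^ L := Real.rpow_le_rpow (by norm_num) hb28 hL0
        _ = b ^ (28 * (k:ℝ) * L) := by
            rw [Real.rpow_mul (by linarith), ← Real.rpow_natCast]; push_cast; rfl
        _ ≤ b ^ (s:ℝ) := Real.rpow_le_rpow_of_exponent_le hb1 hs.le
        _ = b ^ s := Real.rpow_natCast _ _

end PBTail

open Classical in
/-- for every `f ∈ DNF^{k,r}` and `0 < ε ≤ 1`,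
`∑_{|S| > 28k·log₂(2r/ε)} f̂(S)² ≤ ε/2`. -/
theorem pbdnf_fourier_tail_bound (n k r : ℕ) (hr : 1 ≤ r)
    (ε : ℝ) (hε0 : 0 < ε) (hε1 : ε ≤ 1)
    (f : (Fin n → Bool) → ℝ) (hf : IsPBDNF k r f) :
    ∑ S ∈ Finset.univ.filter
        (fun S : Finset (Fin n) =>
          28 * (k : ℝ) * Real.logb 2 (2 * r / ε) < (S.card : ℝ)),
      (pbFourier f S) ^ 2 ≤ ε / 2 := by
  obtain ⟨m, a, A, B, ha, hAB, hfx⟩ := hf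
  obtain ⟨z, hz, hq, hzs⟩ := PBTail.exists_z k r hr ε hε0 hε1
  have hr' : (1:ℝ) ≤ r := by exact_mod_cast hr
  have hr0 : (0:ℝ) < r := by linarith
  let sat : ℕ → Fin m → (Fin n → Bool) → Prop := fun c t x =>
    c ≤ a t ∧ (∀ i ∈ A t, x i = true) ∧ (∀ j ∈ B t, x j = false)
  let V : Fin m → Finset (Fin n) := fun t => A t ∪ B t
  have hV : ∀ t, (V t).card ≤ k := fun t => (Finset.card_union_le _ _).trans (hAB t)
  have hdep : ∀ c t x y, (∀ i ∈ V t, x i = y i) → sat c t x → sat c t y := by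
    rintro c t x y hxy ⟨h1, h2, h3⟩
    refine ⟨h1, fun i hi => ?_, fun i hi => ?_⟩
    · rw [← hxy i (Finset.mem_union_left _ hi)]; exact h2 i hi
    · rw [← hxy i (Finset.mem_union_right _ hi)]; exact h3 i hi
  have hdec : ∀ x, f x = 2 / r * (∑ c ∈ Finset.Icc 1 r, PBTail.orf (sat c) x) - 1 := by
    intro x
    rw [hfx x]
    congr 2
    set F := Finset.univ.sup fun t =>
        if (∀ i ∈ A t, x i = true) ∧ (∀ j ∈ B t, x j = false) then a t else 0 with hF
    have hFr : F ≤ r := by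
      rw [hF]
      refine Finset.sup_le fun t _ => ?_
      split_ifs
      · exact ha t
      · exact Nat.zero_le _
    have : ∀ c ∈ Finset.Icc 1 r, PBTail.orf (sat c) x = if c ≤ F then 1 else 0 := by
      intro c hc
      have hc1 : 1 ≤ c := (Finset.mem_Icc.mp hc).1
      unfold PBTail.orf
      congr 1
      rw [hF, eq_iff_iff, Finset.le_sup_iff (by exact hc1)]
      constructor
      · rintro ⟨t, h1, h2⟩
        exact ⟨t, Finset.mem_univ _, by rw [if_pos h2]; exact h1⟩
      · rintro ⟨t, _, h⟩
        split_ifs at h with h2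
        · exact ⟨t, h, h2⟩
        · omega
    rw [Finset.sum_congr rfl this, Finset.sum_boole]
    have : Finset.filter (fun c => c ≤ F) (Finset.Icc 1 r) = Finset.Icc 1 F := by
      ext c; simp only [Finset.mem_filter, Finset.mem_Icc]; omega
    rw [this]; simp
  have hcoef : ∀ S : Finset (Fin n), S.Nonempty → pbFourier f S
      = 2 / r * ∑ c ∈ Finset.Icc 1 r, pbFourier (PBTail.orf (sat c)) S := by
    intro S hS
    have h0 := PBTail.sum_chi S hS
    have e : ∀ g : (Fin n → Bool) → ℝ, pbFourier g S = (∑ x, g x * PBTail.chi S x) / 2 ^ n :=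
      fun g => rfl
    simp only [e, hdec]
    rw [← Finset.sum_div, Finset.sum_comm, ← mul_div_assoc]
    congr 1
    simp only [sub_mul, one_mul, Finset.sum_sub_distrib, h0, sub_zero, Finset.mul_sum,
      Finset.sum_mul]
    refine Finset.sum_congr rfl fun x _ => Finset.sum_congr rfl fun c _ => by ring
  have hsq : ∀ S : Finset (Fin n), S.Nonempty → pbFourier f S ^ 2
      ≤ 4 / r * ∑ c ∈ Finset.Icc 1 r, pbFourier (PBTail.orf (sat c)) S ^ 2 := by
    intro S hS
    rw [hcoef S hS, mul_pow]
    have := sq_sum_le_card_mul_sum_sq (s := Finset.Icc 1 r)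
      (f := fun c => pbFourier (PBTail.orf (sat c)) S)
    simp only [Nat.card_Icc, Nat.add_sub_cancel] at this
    calc _ ≤ (2 / (r:ℝ)) ^ 2 * (r * ∑ c ∈ Finset.Icc 1 r, pbFourier (PBTail.orf (sat c)) S ^ 2) := by
          gcongr
      _ = _ := by field_simp; ring
  have hL0 : 0 ≤ 28 * (k:ℝ) * Real.logb 2 (2 * r / ε) := by
    have : 0 ≤ Real.logb 2 (2 * r / ε) := Real.logb_nonneg (by norm_num) (by
      rw [le_div_iff₀ hε0]; linarith)
    positivity
  set P := Finset.univ.filter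
        (fun S : Finset (Fin n) =>
          28 * (k : ℝ) * Real.logb 2 (2 * r / ε) < (S.card : ℝ)) with hP
  have htail : ∀ c, ∑ S ∈ P, pbFourier (PBTail.orf (sat c)) S ^ 2 ≤ ε / 8 := by
    intro c
    have h1 := PBTail.main_le (sat c) V (hdep c) k hV z hz hq
    have h2 : 16 / ε * ∑ S ∈ P, pbFourier (PBTail.orf (sat c)) S ^ 2 ≤ 2 := by
      rw [Finset.mul_sum]
      calc _ ≤ ∑ S ∈ P, (1 + z) ^ S.card * pbFourier (PBTail.orf (sat c)) S ^ 2 := by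
            refine Finset.sum_le_sum fun S hS => ?_
            have := hzs S.card (Finset.mem_filter.mp hS).2
            gcongr
        _ ≤ ∑ S, (1 + z) ^ S.card * pbFourier (PBTail.orf (sat c)) S ^ 2 :=
            Finset.sum_le_sum_of_subset_of_nonneg (Finset.subset_univ _)
              (fun _ _ _ => by positivity)
        _ ≤ 2 := h1
    rw [div_mul_eq_mul_div, div_le_iff₀ hε0] at h2
    linarith
  calc ∑ S ∈ P, pbFourier f S ^ 2
      ≤ ∑ S ∈ P, 4 / r * ∑ c ∈ Finset.Icc 1 r, pbFourier (PBTail.orf (sat c)) S ^ 2 := by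
        refine Finset.sum_le_sum fun S hS => hsq S ?_
        have h := (Finset.mem_filter.mp hS).2
        have : (0:ℝ) < S.card := lt_of_le_of_lt hL0 h
        exact Finset.card_pos.mp (by exact_mod_cast this)
    _ = 4 / r * ∑ c ∈ Finset.Icc 1 r, ∑ S ∈ P, pbFourier (PBTail.orf (sat c)) S ^ 2 := by
        rw [← Finset.mul_sum, Finset.sum_comm]
    _ ≤ 4 / r * ∑ c ∈ Finset.Icc 1 r, ε / 8 := by
        gcongr with c _
        exact htail c
    _ = ε / 2 := by
        simp only [Finset.sum_const, Nat.card_Icc, Nat.add_sub_cancel, nsmul_eq_mul]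
        field_simp
        norm_num
end
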